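/- For each integer b ≥ 2 there exists λ_b < 1 such that for every λ ∈ (λ_b, 1) the graph {(x, W_{λ,b}(x)) : x ∈ [0,1)} of the classical Weierstrass function W_{λ,b} has Hausdorff dimension 2 + log λ / log b. -/

import Mathlib

open MeasureTheory Real Set Filter

noncomputable section

/-- The classical Weierstrass function `W_{λ,b}(x) = Σ_{n≥0} λ^n cos(2π b^n x)`. -/
def Wc (b : ℕ) (l : ℝ) (x : ℝ) : ℝ := ∑' n : ℕ, l ^ n * Real.cos (2 * π * (b : ℝ) ^ n * x)

lemma abs_sin_add_sub_le (a h : ℝ) : |sin (a + h) - sin a - h * cos a| ≤ h ^ 2 := by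
  have key : ∀ x ∈ Metric.closedBall (0 : ℝ) |h|,
      HasDerivWithinAt (fun x => sin (a + x) - x * cos a) (cos (a + x) - cos a)
        (Metric.closedBall (0 : ℝ) |h|) x := by
    intro x _
    have h1 : HasDerivAt (fun x => sin (a + x)) (cos (a + x)) x := by
      simpa using (hasDerivAt_id x).const_add a |>.sin
    have h2 : HasDerivAt (fun x => x * cos a) (1 * cos a) x := (hasDerivAt_id x).mul_const _
    exact ((h1.sub h2).congr_deriv (by rw [one_mul])).hasDerivWithinAt
  have bound : ∀ x ∈ Metric.closedBall (0 : ℝ) |h|, ‖cos (a + x) - cos a‖ ≤ |h| := by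
    intro x hx
    rw [mem_closedBall_zero_iff, Real.norm_eq_abs] at hx
    have := Real.abs_cos_sub_cos_le (a + x) a
    rw [Real.norm_eq_abs]
    refine this.trans ?_
    simpa using hx
  have := (convex_closedBall (0 : ℝ) |h|).norm_image_sub_le_of_norm_hasDerivWithin_le key bound
    (x := 0) (y := h) (by simp) (by simp)
  simp only [add_zero, zero_mul, sub_zero, Real.norm_eq_abs] at this
  rw [abs_mul_abs_self] at this
  calc _ = |sin (a + h) - h * cos a - sin a| := by ring_nf
    _ ≤ h * h := this
    _ = h ^ 2 := by ring

lemma abs_cos_add_sub_le (a h : ℝ) : |cos (a + h) - cos a + h * sin a| ≤ h ^ 2 := by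
  have := abs_sin_add_sub_le (a + π / 2) h
  rwa [show a + π / 2 + h = a + h + π / 2 by ring, sin_add_pi_div_two, sin_add_pi_div_two,
    cos_add_pi_div_two, mul_neg, sub_neg_eq_add] at this

/-- Geometric sums with ratio `r < 1` started at exponent one. -/
lemma sum_range_pow_succ_le {r : ℝ} (h0 : 0 ≤ r) (h1 : r < 1) (q : ℕ) :
    ∑ j ∈ Finset.range q, r ^ (j + 1) ≤ r / (1 - r) := by
  have h := (summable_geometric_of_lt_one h0 h1).sum_le_tsum (Finset.range q)
    (fun i _ => pow_nonneg h0 i)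
  rw [tsum_geometric_of_lt_one h0 h1] at h
  calc ∑ j ∈ Finset.range q, r ^ (j + 1) = r * ∑ j ∈ Finset.range q, r ^ j := by
        rw [Finset.mul_sum]; exact Finset.sum_congr rfl fun i _ => by ring
    _ ≤ r * (1 - r)⁻¹ := by gcongr
    _ = r / (1 - r) := by rw [div_eq_mul_inv]

/-- The (rescaled) slope of the `q`-th partial sum of the Weierstrass function at `z / b ^ q`. -/
def slopeSum (b : ℕ) (l : ℝ) (q : ℕ) (z : ℝ) : ℝ :=
  ∑ j ∈ Finset.range q, ((b * l)⁻¹) ^ (j + 1) * sin (2 * π * z / b ^ (j + 1))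

section Basic

variable {b : ℕ} {l : ℝ}

lemma inv_mul_nonneg (hl : 0.99 < l) : (0 : ℝ) ≤ (b * l)⁻¹ := by
  have : (0 : ℝ) < l := by linarith
  positivity

lemma inv_mul_le (hb : 2 ≤ b) (hl : 0.99 < l) : ((b : ℝ) * l)⁻¹ ≤ 0.5051 := by
  have hb' : (2 : ℝ) ≤ b := by exact_mod_cast hb
  rw [inv_le_comm₀ (by nlinarith) (by norm_num)]
  norm_num
  nlinarith

lemma inv_mul_pos (hb : 2 ≤ b) (hl : 0.99 < l) : 0 < ((b : ℝ) * l)⁻¹ := by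
  have hb' : (2 : ℝ) ≤ b := by exact_mod_cast hb
  have : (0 : ℝ) < l := by linarith
  positivity

lemma Wc_summable (hl : 0.99 < l) (hl1 : l < 1) (x : ℝ) :
    Summable fun n : ℕ => l ^ n * cos (2 * π * (b : ℝ) ^ n * x) := by
  have h0 : 0 ≤ l := by linarith
  refine Summable.of_norm_bounded (summable_geometric_of_lt_one h0 hl1) fun n => ?_
  rw [norm_mul, Real.norm_eq_abs, Real.norm_eq_abs, abs_of_nonneg (pow_nonneg h0 n)]
  exact mul_le_of_le_one_right (pow_nonneg h0 n) (abs_cos_le_one _)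

lemma abs_Wc_le (hl : 0.99 < l) (hl1 : l < 1) (x : ℝ) : |Wc b l x| ≤ (1 - l)⁻¹ := by
  have h0 : 0 ≤ l := by linarith
  rw [← tsum_geometric_of_lt_one h0 hl1, ← Real.norm_eq_abs]
  refine tsum_of_norm_bounded (summable_geometric_of_lt_one h0 hl1).hasSum fun n => ?_
  rw [norm_mul, Real.norm_eq_abs, Real.norm_eq_abs, abs_of_nonneg (pow_nonneg h0 n)]
  exact mul_le_of_le_one_right (pow_nonneg h0 n) (abs_cos_le_one _)

lemma continuous_Wc (hl : 0.99 < l) (hl1 : l < 1) : Continuous (Wc b l) := by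
  have h0 : 0 ≤ l := by linarith
  refine continuous_tsum (fun n => by fun_prop) (summable_geometric_of_lt_one h0 hl1) fun n x => ?_
  rw [norm_mul, Real.norm_eq_abs, Real.norm_eq_abs, abs_of_nonneg (pow_nonneg h0 n)]
  exact mul_le_of_le_one_right (pow_nonneg h0 n) (abs_cos_le_one _)

lemma Wc_add_int (x : ℝ) (a : ℤ) : Wc b l (x + a) = Wc b l x := by
  unfold Wc
  refine tsum_congr fun n => ?_
  have : 2 * π * (b : ℝ) ^ n * (x + a) =
      2 * π * (b : ℝ) ^ n * x + (((b : ℤ) ^ n * a : ℤ) : ℝ) * (2 * π) := by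
    push_cast; ring
  rw [this, cos_add_int_mul_two_pi]

lemma Wc_eq (hl : 0.99 < l) (hl1 : l < 1) (x : ℝ) :
    Wc b l x = cos (2 * π * x) + l * Wc b l (b * x) := by
  unfold Wc
  rw [(Wc_summable hl hl1 x).tsum_eq_zero_add, ← tsum_mul_left]
  congr 1
  · simp
  · refine tsum_congr fun n => ?_
    rw [pow_succ, pow_succ]
    ring_nf

lemma Wc_div_pow (hb : 2 ≤ b) (hl : 0.99 < l) (hl1 : l < 1) (q : ℕ) (z : ℝ) :
    Wc b l (z / b ^ q) =
      l ^ q * (Wc b l z +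
        ∑ j ∈ Finset.range q, (l⁻¹) ^ (j + 1) * cos (2 * π * z / b ^ (j + 1))) := by
  have h0 : l ≠ 0 := by linarith
  have hb0 : (b : ℝ) ≠ 0 := by positivity
  induction q with
  | zero => simp
  | succ q ih =>
    have e : (b : ℝ) * (z / b ^ (q + 1)) = z / b ^ q := by
      rw [pow_succ]; field_simp
    rw [Wc_eq hl hl1, e, ih, Finset.sum_range_succ]
    have : l ^ (q + 1) * l⁻¹ ^ (q + 1) = 1 := by rw [← mul_pow, mul_inv_cancel₀ h0, one_pow]
    have e2 : 2 * π * (z / (b : ℝ) ^ (q + 1)) = 2 * π * z / b ^ (q + 1) := by ring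
    rw [e2]
    linear_combination (-cos (2 * π * z / b ^ (q + 1))) * this

lemma abs_slopeSum_le (hb : 2 ≤ b) (hl : 0.99 < l) (q : ℕ) (z : ℝ) :
    |slopeSum b l q z| ≤ 2 := by
  have h0 := inv_mul_nonneg (b := b) hl
  have h1 := inv_mul_le hb hl
  have h2 : |slopeSum b l q z| ≤ ∑ j ∈ Finset.range q, (((b : ℝ) * l)⁻¹) ^ (j + 1) := by
    refine (Finset.abs_sum_le_sum_abs _ _).trans (Finset.sum_le_sum fun j _ => ?_)
    rw [abs_mul, abs_of_nonneg (pow_nonneg h0 _)]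
    exact mul_le_of_le_one_right (pow_nonneg h0 _) (abs_sin_le_one _)
  refine (h2.trans (sum_range_pow_succ_le h0 (by linarith) q)).trans ?_
  rw [div_le_iff₀ (by linarith)]
  linarith

/-- First-order expansion of the increments of the Weierstrass function at scale `b ^ (-q)`. -/
lemma abs_Wc_increment_le (hb : 2 ≤ b) (hl : 0.99 < l) (hl1 : l < 1) (q : ℕ) (z s : ℝ) :
    |(Wc b l ((z + s) / b ^ q) - Wc b l (z / b ^ q)) / l ^ q
      - (Wc b l (z + s) - Wc b l z) + 2 * π * s * slopeSum b l q z| ≤ 20 * s ^ 2 := by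
  have h0 : 0 < l := by linarith
  have hb' : (2 : ℝ) ≤ b := by exact_mod_cast hb
  have hb0 : (b : ℝ) ≠ 0 := by positivity
  have hlq : l ^ q ≠ 0 := by positivity
  rw [Wc_div_pow hb hl hl1, Wc_div_pow hb hl hl1, ← mul_sub, mul_div_cancel_left₀ _ hlq]
  set r : ℝ := l⁻¹ * ((b : ℝ) ^ 2)⁻¹ with hr
  have hr0 : 0 ≤ r := by positivity
  have hr1 : r ≤ 1 / 3 := by
    rw [hr, ← mul_inv, inv_le_comm₀ (by positivity) (by norm_num)]
    norm_num
    nlinarith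
  have e : Wc b l (z + s) + ∑ j ∈ Finset.range q, l⁻¹ ^ (j + 1) * cos (2 * π * (z + s) / b ^ (j + 1))
      - (Wc b l z + ∑ j ∈ Finset.range q, l⁻¹ ^ (j + 1) * cos (2 * π * z / b ^ (j + 1)))
      - (Wc b l (z + s) - Wc b l z) + 2 * π * s * slopeSum b l q z
      = ∑ j ∈ Finset.range q, l⁻¹ ^ (j + 1) *
        (cos (2 * π * z / b ^ (j + 1) + 2 * π * s / b ^ (j + 1)) - cos (2 * π * z / b ^ (j + 1))
          + 2 * π * s / b ^ (j + 1) * sin (2 * π * z / b ^ (j + 1))) := by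
    simp only [mul_add, mul_sub, Finset.sum_add_distrib, Finset.sum_sub_distrib, slopeSum,
      Finset.mul_sum, add_div]
    have : ∀ j, 2 * π * s * (((b : ℝ) * l)⁻¹ ^ (j + 1) * sin (2 * π * z / b ^ (j + 1))) =
        l⁻¹ ^ (j + 1) * (2 * π * s / b ^ (j + 1) * sin (2 * π * z / b ^ (j + 1))) := by
      intro j
      rw [mul_inv, mul_pow, inv_pow (b : ℝ)]
      ring
    simp only [this]
    ring
  rw [e]
  refine (Finset.abs_sum_le_sum_abs _ _).trans ?_
  calc _ ≤ ∑ j ∈ Finset.range q, (4 * π ^ 2 * s ^ 2) * r ^ (j + 1) := by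
        refine Finset.sum_le_sum fun j _ => ?_
        rw [abs_mul, abs_of_nonneg (by positivity)]
        refine (mul_le_mul_of_nonneg_left (abs_cos_add_sub_le _ _) (by positivity)).trans
          (le_of_eq ?_)
        rw [hr, mul_pow, inv_pow ((b : ℝ) ^ 2), ← pow_mul, div_pow, ← pow_mul, mul_comm 2 (j + 1)]
        ring
    _ ≤ (4 * π ^ 2 * s ^ 2) * (1 / 2) := by
        rw [← Finset.mul_sum]
        gcongr
        refine (sum_range_pow_succ_le hr0 (by linarith) q).trans ?_
        rw [div_le_iff₀ (by linarith)]
        linarith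
    _ ≤ 20 * s ^ 2 := by
        have : π ^ 2 ≤ 10 := by nlinarith [pi_lt_d2, pi_pos]
        nlinarith [sq_nonneg s]

end Basic

section Transversality

variable {b : ℕ} {l : ℝ}

/-- The difference of the slopes along two inverse branches that differ by the integer `a`. -/
def slopeDiff (b : ℕ) (l : ℝ) (q : ℕ) (a : ℤ) (z : ℝ) : ℝ :=
  slopeSum b l q (z + a) - slopeSum b l q z

/-- The derivative of `slopeDiff`. -/
def slopeDiffDeriv (b : ℕ) (l : ℝ) (q : ℕ) (a : ℤ) (z : ℝ) : ℝ :=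
  ∑ j ∈ Finset.range q, (((b : ℝ) * l)⁻¹) ^ (j + 1) * (2 * π / b ^ (j + 1)) *
    (cos (2 * π * (z + a) / b ^ (j + 1)) - cos (2 * π * z / b ^ (j + 1)))

lemma abs_slopeDiff_sub_le (hb : 2 ≤ b) (hl : 0.99 < l) (q : ℕ) (a : ℤ) (x y : ℝ) :
    |slopeDiff b l q a y - slopeDiff b l q a x - slopeDiffDeriv b l q a x * (y - x)|
      ≤ 80 * (y - x) ^ 2 := by
  have h0 := inv_mul_nonneg (b := b) hl
  have h1 := inv_mul_le hb hl
  have hb' : (2 : ℝ) ≤ b := by exact_mod_cast hb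
  set g : ℝ := ((b : ℝ) * l)⁻¹ with hg
  set h := y - x with hh
  have hy : y = x + h := by rw [hh]; ring
  have e : slopeDiff b l q a y - slopeDiff b l q a x - slopeDiffDeriv b l q a x * h =
      ∑ j ∈ Finset.range q, g ^ (j + 1) *
        ((sin (2 * π * (x + a) / b ^ (j + 1) + 2 * π * h / b ^ (j + 1))
            - sin (2 * π * (x + a) / b ^ (j + 1))
            - 2 * π * h / b ^ (j + 1) * cos (2 * π * (x + a) / b ^ (j + 1)))
          - (sin (2 * π * x / b ^ (j + 1) + 2 * π * h / b ^ (j + 1))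
            - sin (2 * π * x / b ^ (j + 1))
            - 2 * π * h / b ^ (j + 1) * cos (2 * π * x / b ^ (j + 1)))) := by
    unfold slopeDiff slopeDiffDeriv slopeSum
    rw [Finset.sum_mul, ← Finset.sum_sub_distrib, ← Finset.sum_sub_distrib,
      ← Finset.sum_sub_distrib, ← Finset.sum_sub_distrib]
    refine Finset.sum_congr rfl fun j _ => ?_
    rw [show 2 * π * (y + a) / (b : ℝ) ^ (j + 1)
        = 2 * π * (x + a) / b ^ (j + 1) + 2 * π * h / b ^ (j + 1) by rw [hy]; ring,
      show 2 * π * y / (b : ℝ) ^ (j + 1)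
        = 2 * π * x / b ^ (j + 1) + 2 * π * h / b ^ (j + 1) by rw [hy]; ring]
    ring
  rw [e]
  refine (Finset.abs_sum_le_sum_abs _ _).trans ?_
  calc _ ≤ ∑ j ∈ Finset.range q, (8 * π ^ 2 * h ^ 2) * (1 / 3 : ℝ) ^ (j + 1) := by
        refine Finset.sum_le_sum fun j _ => ?_
        rw [abs_mul, abs_of_nonneg (by positivity)]
        have hd : (2 * π * h / (b : ℝ) ^ (j + 1)) ^ 2
            = 4 * π ^ 2 * h ^ 2 * (((b : ℝ) ^ 2)⁻¹) ^ (j + 1) := by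
          rw [inv_pow ((b : ℝ) ^ 2), ← pow_mul, div_pow, ← pow_mul, mul_comm 2 (j + 1)]
          ring
        have hr : g * ((b : ℝ) ^ 2)⁻¹ ≤ 1 / 3 := by
          have : ((b : ℝ) ^ 2)⁻¹ ≤ 1 / 4 := by
            rw [inv_le_comm₀ (by positivity) (by norm_num)]
            norm_num
            nlinarith
          have h3 : 0 ≤ ((b : ℝ) ^ 2)⁻¹ := by positivity
          nlinarith
        calc _ ≤ g ^ (j + 1) * (2 * (2 * π * h / (b : ℝ) ^ (j + 1)) ^ 2) := by
              gcongr
              refine (abs_sub _ _).trans ?_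
              linarith [abs_sin_add_sub_le (2 * π * (x + a) / b ^ (j + 1))
                (2 * π * h / b ^ (j + 1)), abs_sin_add_sub_le (2 * π * x / b ^ (j + 1))
                (2 * π * h / b ^ (j + 1))]
          _ = (8 * π ^ 2 * h ^ 2) * (g * ((b : ℝ) ^ 2)⁻¹) ^ (j + 1) := by
              rw [hd, mul_pow]; ring
          _ ≤ _ := by gcongr
    _ ≤ (8 * π ^ 2 * h ^ 2) * (1 / 2) := by
        rw [← Finset.mul_sum]
        gcongr
        refine (sum_range_pow_succ_le (by norm_num) (by norm_num) q).trans ?_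
        norm_num
    _ ≤ 80 * h ^ 2 := by
        have : π ^ 2 ≤ 10 := by nlinarith [pi_lt_d2, pi_pos]
        nlinarith [sq_nonneg h]

/-- Jordan's inequality at the non-zero residues modulo `b`. -/
lemma two_div_le_abs_sin (hb : 2 ≤ b) {a : ℤ} (ha : ¬ (b : ℤ) ∣ a) :
    2 / (b : ℝ) ≤ |sin (π * a / b)| := by
  have hb0 : (0 : ℝ) < b := by positivity
  have hbz : (0 : ℤ) < b := by positivity
  set r := a % b with hr
  have hr0 : 0 < r := lt_of_le_of_ne (Int.emod_nonneg _ hbz.ne')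
    fun h => ha (Int.dvd_of_emod_eq_zero h.symm)
  have hrb : r < b := Int.emod_lt_of_pos _ hbz
  have e : π * a / b = π * r / b + (a / b : ℤ) * π := by
    have : (a : ℝ) = b * (a / b : ℤ) + r := by
      exact_mod_cast (Int.mul_ediv_add_emod a b).symm
    rw [this]
    field_simp
    ring
  have e2 : |sin (π * a / b)| = |sin (π * r / b)| := by
    rw [e, sin_add_int_mul_pi, abs_mul, abs_zpow, abs_neg, abs_one, one_zpow, one_mul]
  rw [e2]
  have jordan : ∀ r : ℤ, 0 < r → 2 * r ≤ b → 2 / (b : ℝ) ≤ sin (π * r / b) := by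
    intro r h1 h2
    have h1' : (1 : ℝ) ≤ r := by exact_mod_cast h1
    have h2' : 2 * (r : ℝ) ≤ b := by exact_mod_cast h2
    have := Real.mul_le_sin (x := π * r / b) (by positivity)
      (by rw [div_le_div_iff₀ hb0 (by norm_num)]; nlinarith [pi_pos])
    refine le_trans ?_ this
    rw [show 2 / π * (π * r / b) = 2 * r / b by field_simp]
    gcongr
    linarith
  rcases le_total (2 * r) b with h | h
  · exact (jordan r hr0 h).trans (le_abs_self _)
  · have := jordan (b - r) (by omega) (by omega)
    rw [show π * ((b - r : ℤ) : ℝ) / b = π - π * r / b by push_cast; field_simp, sin_pi_sub] at this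
    exact this.trans (le_abs_self _)

lemma sin_sub_sin_branch (z : ℝ) (a : ℤ) (m : ℝ) :
    sin (2 * π * (z + a) / m) - sin (2 * π * z / m)
      = 2 * sin (π * a / m) * cos (π * (2 * z + a) / m) := by
  rw [sin_sub_sin]; ring_nf

lemma cos_sub_cos_branch (z : ℝ) (a : ℤ) (m : ℝ) :
    cos (2 * π * (z + a) / m) - cos (2 * π * z / m)
      = -(2 * sin (π * a / m) * sin (π * (2 * z + a) / m)) := by
  rw [cos_sub_cos]; ring_nf

lemma abs_sin_branch_two (hb : b = 2) {a : ℤ} (ha : ¬ (b : ℤ) ∣ a) :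
    |sin (π * a / (b : ℝ) ^ 2)| ≤ 0.7072 := by
  subst hb
  refine abs_le_of_sq_le_sq ?_ (by norm_num)
  have hc : cos (2 * (π * a / ((2 : ℕ) : ℝ) ^ 2)) = 0 := by
    rw [cos_eq_zero_iff]
    obtain ⟨k, hk⟩ := Int.not_even_iff_odd.mp (fun h => ha (by exact_mod_cast h.two_dvd))
    refine ⟨k, ?_⟩
    rw [hk]; push_cast; ring
  have := sin_sq_add_cos_sq (π * a / ((2 : ℕ) : ℝ) ^ 2)
  rw [cos_two_mul] at hc
  nlinarith

/-- Weighted sums dominated by their tail: for `b ≥ 3` everything but the first summand is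
treated as tail, for `b = 2` the second summand is estimated separately. -/
lemma sum_branch_tail_le (r c : ℝ) (h0 : 0 ≤ r) (h1 : r < 1) (d : ℕ → ℝ)
    (hc : |d 1| ≤ c) (hd : ∀ j, |d j| ≤ 1) (q : ℕ) :
    |∑ j ∈ Finset.range (q + 1), r ^ (j + 1) * d j - r * d 0|
      ≤ r ^ 2 * c + r ^ 3 / (1 - r) := by
  have hc0 : 0 ≤ c := (abs_nonneg _).trans hc
  have hr : 0 < 1 - r := by linarith
  rw [Finset.sum_range_succ']
  simp only [zero_add, pow_one, add_sub_cancel_right]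
  cases q with
  | zero => simp; positivity
  | succ q =>
    rw [Finset.sum_range_succ']
    refine (abs_add_le _ _).trans ?_
    rw [add_comm]
    gcongr
    · simp only [zero_add]
      rw [abs_mul, abs_of_nonneg (by positivity)]
      norm_num
      gcongr
    · refine (Finset.abs_sum_le_sum_abs _ _).trans ?_
      calc _ ≤ ∑ j ∈ Finset.range q, r ^ 2 * r ^ (j + 1) := by
            refine Finset.sum_le_sum fun j _ => ?_
            rw [abs_mul, abs_of_nonneg (by positivity)]
            refine (mul_le_of_le_one_right (by positivity) (hd _)).trans (le_of_eq (by ring))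
        _ ≤ r ^ 2 * (r / (1 - r)) := by
            rw [← Finset.mul_sum]
            gcongr
            exact sum_range_pow_succ_le h0 h1 q
        _ = r ^ 3 / (1 - r) := by ring

lemma tail_numeric (hb : 2 ≤ b) (hl : 0.99 < l) (c : ℝ)
    (hc : c ≤ 1) (hc2 : b = 2 → c ≤ 0.7072) :
    let g : ℝ := ((b : ℝ) * l)⁻¹
    g ^ 2 * c + g ^ 3 / (1 - g) ≤ 0.9 * (g * (2 / b)) ∧
    (g / b) ^ 2 * c + (g / b) ^ 3 / (1 - g / b) ≤ 0.3 * ((g / b) * (2 / b)) := by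
  intro g
  have hg0 : 0 < g := inv_mul_pos hb hl
  have hg1 : g ≤ 0.5051 := inv_mul_le hb hl
  have hb' : (2 : ℝ) ≤ b := by exact_mod_cast hb
  have hl0 : 0 < l := by linarith
  have hbg : b * g ≤ 1.0102 := by
    have : b * g = l⁻¹ := by
      simp only [g]; field_simp
    rw [this, inv_le_comm₀ hl0 (by norm_num)]
    norm_num
    linarith
  set t := g / b with ht
  have ht0 : 0 < t := by positivity
  have htb : t * b = g := by rw [ht]; field_simp
  have reduce : ∀ x k : ℝ, 0 < x → x < 1 → (b * x) * (c * (1 - x) + x) ≤ 2 * k * (1 - x) →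
      x ^ 2 * c + x ^ 3 / (1 - x) ≤ k * (x * (2 / b)) := by
    intro x k hx hx1 h
    have hx2 : 0 < 1 - x := by linarith
    have e1 : x ^ 2 * c + x ^ 3 / (1 - x) = x * ((b * x) * (c * (1 - x) + x)) / (b * (1 - x)) := by
      field_simp
    have e2 : k * (x * (2 / b)) = x * (2 * k * (1 - x)) / (b * (1 - x)) := by
      field_simp
    rw [e1, e2]
    gcongr
  rcases Nat.lt_or_ge 2 b with h3 | h2
  · have h3' : (3 : ℝ) ≤ b := by exact_mod_cast h3
    have hg3 : g ≤ 0.3368 := by nlinarith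
    have ht3 : t ≤ 0.1123 := by nlinarith
    constructor
    · refine reduce g _ hg0 (by linarith) ?_
      have : c * (1 - g) + g ≤ 1 := by nlinarith
      have : 0 ≤ b * g := by positivity
      nlinarith
    · refine reduce t _ ht0 (by linarith) ?_
      have : c * (1 - t) + t ≤ 1 := by nlinarith
      rw [mul_comm (b : ℝ) t, htb]
      nlinarith
  · have hb2 : b = 2 := le_antisymm h2 hb
    have hc3 := hc2 hb2
    have hb2' : (b : ℝ) = 2 := by rw [hb2]; norm_num
    rw [hb2'] at htb
    constructor
    · refine reduce g _ hg0 (by linarith) ?_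
      rw [hb2']
      have : c * (1 - g) + g ≤ 0.7072 * (1 - g) + g := by gcongr; linarith
      nlinarith
    · refine reduce t _ ht0 (by linarith) ?_
      rw [hb2']
      have : c * (1 - t) + t ≤ 0.7072 * (1 - t) + t := by gcongr; linarith
      nlinarith

set_option maxHeartbeats 800000 in
/-- Transversality: along branches whose first digits differ, the difference of slopes and its
derivative are never simultaneously small. -/
lemma exists_transversality (hb : 2 ≤ b) (hl : 0.99 < l) :
    ∃ δ > 0, ∀ (q : ℕ) (a : ℤ) (z : ℝ), ¬ (b : ℤ) ∣ a →
      δ ≤ |slopeDiff b l (q + 1) a z| ∨ δ ≤ |slopeDiffDeriv b l (q + 1) a z| := by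
  set g : ℝ := ((b : ℝ) * l)⁻¹ with hg
  have hg0 : 0 < g := inv_mul_pos hb hl
  have hg1 : g ≤ 0.5051 := inv_mul_le hb hl
  have hb' : (2 : ℝ) ≤ b := by exact_mod_cast hb
  set t := g / b with ht
  have ht0 : 0 < t := by positivity
  have ht1 : t < 1 := by rw [ht, div_lt_one (by positivity)]; linarith
  refine ⟨0.02 * (t * (2 / b)), by positivity, fun q a z ha => ?_⟩
  by_contra! hcon
  obtain ⟨hF, hD⟩ := hcon
  set S : ℕ → ℝ := fun j => sin (π * a / (b : ℝ) ^ (j + 1)) * cos (π * (2 * z + a) / (b : ℝ) ^ (j + 1))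
  set D : ℕ → ℝ := fun j => sin (π * a / (b : ℝ) ^ (j + 1)) * sin (π * (2 * z + a) / (b : ℝ) ^ (j + 1))
  have eF : slopeDiff b l (q + 1) a z = 2 * ∑ j ∈ Finset.range (q + 1), g ^ (j + 1) * S j := by
    unfold slopeDiff slopeSum
    rw [← Finset.sum_sub_distrib, Finset.mul_sum]
    refine Finset.sum_congr rfl fun j _ => ?_
    rw [← mul_sub, sin_sub_sin_branch]; ring
  have eD : slopeDiffDeriv b l (q + 1) a z
      = -(4 * π) * ∑ j ∈ Finset.range (q + 1), t ^ (j + 1) * D j := by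
    unfold slopeDiffDeriv
    rw [Finset.mul_sum]
    refine Finset.sum_congr rfl fun j _ => ?_
    rw [cos_sub_cos_branch, ht, div_pow]; ring
  set c := |sin (π * a / (b : ℝ) ^ 2)| with hc
  have hS : ∀ j, |S j| ≤ 1 := fun j => by
    rw [abs_mul]; exact mul_le_one₀ (abs_sin_le_one _) (abs_nonneg _) (abs_cos_le_one _)
  have hDb : ∀ j, |D j| ≤ 1 := fun j => by
    rw [abs_mul]; exact mul_le_one₀ (abs_sin_le_one _) (abs_nonneg _) (abs_sin_le_one _)
  have hS1 : |S 1| ≤ c := by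
    rw [abs_mul]; exact mul_le_of_le_one_right (abs_nonneg _) (abs_cos_le_one _)
  have hD1 : |D 1| ≤ c := by
    rw [abs_mul]; exact mul_le_of_le_one_right (abs_nonneg _) (abs_sin_le_one _)
  have tF := sum_branch_tail_le g c hg0.le (by linarith) S hS1 hS q
  have tD := sum_branch_tail_le t c ht0.le ht1 D hD1 hDb q
  obtain ⟨nF, nD⟩ := tail_numeric hb hl c (abs_sin_le_one _) (fun h => abs_sin_branch_two h ha)
  have hs := two_div_le_abs_sin hb ha
  have htg : t ≤ g := div_le_self hg0.le (by linarith)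
  have h2b : 0 < 2 / (b : ℝ) := by positivity
  rw [eF, abs_mul, abs_two] at hF
  rw [eD, abs_mul, abs_neg, abs_of_nonneg (by positivity)] at hD
  have bF : |g * S 0| ≤ 0.92 * (g * (2 / b)) := by
    have h1 := abs_sub_abs_le_abs_sub (g * S 0) (∑ j ∈ Finset.range (q + 1), g ^ (j + 1) * S j)
    rw [abs_sub_comm] at h1
    have h2 : t * (2 / b) ≤ g * (2 / b) := by gcongr
    nlinarith
  have bD : |t * D 0| ≤ 0.32 * (t * (2 / b)) := by
    have h1 := abs_sub_abs_le_abs_sub (t * D 0) (∑ j ∈ Finset.range (q + 1), t ^ (j + 1) * D j)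
    rw [abs_sub_comm] at h1
    have h2 : 1 * |∑ j ∈ Finset.range (q + 1), t ^ (j + 1) * D j|
        ≤ 4 * π * |∑ j ∈ Finset.range (q + 1), t ^ (j + 1) * D j| := by
      gcongr
      linarith [pi_gt_three]
    linarith
  rw [abs_mul, abs_of_pos hg0, mul_left_comm, mul_le_mul_iff_right₀ hg0] at bF
  rw [abs_mul, abs_of_pos ht0, mul_left_comm, mul_le_mul_iff_right₀ ht0] at bD
  have e : S 0 ^ 2 + D 0 ^ 2 = sin (π * a / b) ^ 2 := by
    simp only [S, D, zero_add, pow_one]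
    nlinarith [sin_sq_add_cos_sq (π * (2 * z + a) / (b : ℝ))]
  have q1 : S 0 ^ 2 ≤ (0.92 * (2 / (b : ℝ))) ^ 2 := sq_le_sq' (abs_le.mp bF).1 (abs_le.mp bF).2
  have q2 : D 0 ^ 2 ≤ (0.32 * (2 / (b : ℝ))) ^ 2 := sq_le_sq' (abs_le.mp bD).1 (abs_le.mp bD).2
  have q3 : (2 / (b : ℝ)) ^ 2 ≤ sin (π * a / b) ^ 2 := by
    rw [← sq_abs (sin _)]; gcongr
  nlinarith [mul_pos h2b h2b]

end Transversality

section Coincidences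

variable {b : ℕ} {l : ℝ}

/-- A function which never is small together with its derivative takes small values on a set
of proportionally small measure. -/
lemma volume_small_values_le {f f' : ℝ → ℝ} {L δ : ℝ} (hδ : 0 < δ)
    (taylor : ∀ x y, |f y - f x - f' x * (y - x)| ≤ L * (y - x) ^ 2)
    (transversal : ∀ x, δ ≤ |f x| ∨ δ ≤ |f' x|) {P : ℕ} (hP : 2 * L ≤ δ * P) (hP0 : 0 < P)
    {N : ℕ} (hN : 0 < N) (ρ : ℝ) :
    volume {x ∈ Ico (0 : ℝ) 1 | |f (N * x)| ≤ ρ} ≤ ENNReal.ofReal (4 * P / δ * ρ) := by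
  have hP1 : (1 : ℝ) ≤ P := by exact_mod_cast hP0
  have hN1 : (1 : ℝ) ≤ N := by exact_mod_cast hN
  rcases le_or_gt δ ρ with h | h
  · calc _ ≤ volume (Ico (0 : ℝ) 1) := measure_mono (sep_subset _ _)
      _ = ENNReal.ofReal 1 := by simp
      _ ≤ _ := by
        refine ENNReal.ofReal_le_ofReal ?_
        rw [div_mul_eq_mul_div, le_div_iff₀ hδ]
        nlinarith
  set E : ℕ → Set ℝ := fun i =>
    {x ∈ Ico ((i : ℝ) / (P * N)) ((i + 1 : ℝ) / (P * N)) | |f (N * x)| ≤ ρ}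
  have hsub : {x ∈ Ico (0 : ℝ) 1 | |f (N * x)| ≤ ρ} ⊆ ⋃ i ∈ Finset.range (P * N), E i := by
    rintro x ⟨⟨h0, h1⟩, hx⟩
    have hPN : (0 : ℝ) < P * N := by positivity
    simp only [mem_iUnion]
    refine ⟨⌊x * (P * N)⌋₊, Finset.mem_range.mpr ?_, ⟨?_, ?_⟩, hx⟩
    · rw [Nat.floor_lt (by positivity)]
      push_cast
      nlinarith
    · rw [div_le_iff₀ hPN]
      exact Nat.floor_le (by positivity)
    · rw [lt_div_iff₀ hPN]
      exact Nat.lt_floor_add_one _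
  have hE : ∀ i, volume (E i) ≤ ENNReal.ofReal (4 * ρ / (δ * N)) := by
    intro i
    refine (Real.volume_le_diam _).trans (Metric.ediam_le ?_)
    rintro x ⟨⟨hx1, hx2⟩, hx⟩ y ⟨⟨hy1, hy2⟩, hy⟩
    rw [edist_comm, edist_dist, Real.dist_eq]
    refine ENNReal.ofReal_le_ofReal ?_
    have hf' : δ ≤ |f' (N * x)| := (transversal (N * x)).resolve_left (by linarith)
    have hxy : |N * y - N * x| * P ≤ 1 := by
      rw [← mul_sub, abs_mul, abs_of_pos (by positivity : (0 : ℝ) < N)]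
      have : |y - x| ≤ 1 / (P * N) := by
        have e : (i + 1 : ℝ) / (P * N) = i / (P * N) + 1 / (P * N) := by ring
        rw [abs_le]; constructor <;> linarith
      rw [le_div_iff₀ (by positivity)] at this
      linarith
    have ht := taylor (N * x) (N * y)
    set h := (N : ℝ) * y - N * x with hh
    have h1 : |f' (N * x) * h| ≤ 2 * ρ + L * h ^ 2 := by
      have e : f' (N * x) * h = f (N * y) - f (N * x)
        - (f (N * y) - f (N * x) - f' (N * x) * h) := by ring
      rw [e]
      refine (abs_sub _ _).trans ?_
      have := abs_sub (f (N * y)) (f (N * x))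
      linarith
    rw [abs_mul] at h1
    have h2 : L * h ^ 2 ≤ δ / 2 * |h| := by
      rw [← sq_abs h]
      have h3 : 2 * L * |h| ^ 2 ≤ δ * P * |h| ^ 2 := by gcongr
      have h4 : δ * |h| * (|h| * P) ≤ δ * |h| * 1 := by gcongr
      nlinarith
    have h5 : δ * |h| ≤ |f' (N * x)| * |h| := by gcongr
    rw [le_div_iff₀ (by positivity)]
    have h6 : |h| = N * |y - x| := by
      rw [hh, ← mul_sub, abs_mul, abs_of_pos (by positivity : (0 : ℝ) < N)]
    rw [h6] at h1 h2 h5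
    nlinarith
  calc _ ≤ volume (⋃ i ∈ Finset.range (P * N), E i) := measure_mono hsub
    _ ≤ ∑ i ∈ Finset.range (P * N), volume (E i) := measure_biUnion_finset_le _ _
    _ ≤ ∑ i ∈ Finset.range (P * N), ENNReal.ofReal (4 * ρ / (δ * N)) :=
        Finset.sum_le_sum fun i _ => hE i
    _ = ENNReal.ofReal (4 * P / δ * ρ) := by
        rw [Finset.sum_const, Finset.card_range, nsmul_eq_mul, ← ENNReal.ofReal_natCast,
          ← ENNReal.ofReal_mul (by positivity)]
        congr 1
        push_cast
        field_simp

lemma slopeSum_succ_mul (hb : 2 ≤ b) (q : ℕ) (w : ℝ) :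
    slopeSum b l (q + 1) (b * w)
      = ((b : ℝ) * l)⁻¹ * (sin (2 * π * w) + slopeSum b l q w) := by
  have hb0 : (b : ℝ) ≠ 0 := by positivity
  unfold slopeSum
  rw [Finset.sum_range_succ', mul_add, Finset.mul_sum, add_comm]
  congr 1
  · rw [zero_add, pow_one, pow_one]
    congr 2
    field_simp
  · refine Finset.sum_congr rfl fun j _ => ?_
    rw [pow_succ _ (j + 1), pow_succ (b : ℝ) (j + 1),
      show 2 * π * (b * w) / ((b : ℝ) ^ (j + 1) * b) = 2 * π * w / b ^ (j + 1) by field_simp]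
    ring

lemma slopeDiff_succ_mul (hb : 2 ≤ b) (q : ℕ) (e : ℤ) (z : ℝ) :
    slopeDiff b l (q + 1) (b * e) (b * z) = ((b : ℝ) * l)⁻¹ * slopeDiff b l q e z := by
  unfold slopeDiff
  rw [show (b * z + ((b * e : ℤ) : ℝ)) = b * (z + e) by push_cast; ring, slopeSum_succ_mul hb,
    slopeSum_succ_mul hb, show 2 * π * (z + e) = 2 * π * z + e * (2 * π) by ring,
    sin_add_int_mul_two_pi]
  ring

/-- The total measure of coincidences of slopes, up to `ρ`, between inverse branches. -/
def coincidence (b : ℕ) (l : ℝ) (q : ℕ) (ρ : ℝ) : ENNReal :=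
  ∑ a ∈ Finset.Ioo (-(b : ℤ) ^ q) ((b : ℤ) ^ q),
    volume {x ∈ Ico (0 : ℝ) 1 | |slopeDiff b l q a (b ^ q * x)| ≤ ρ}

lemma exists_coincidence_le (hb : 2 ≤ b) (hl : 0.99 < l) (hl1 : l < 1) :
    ∃ C > 0, ∀ (q : ℕ) (ρ : ℝ), 0 ≤ ρ →
      coincidence b l q ρ ≤ ENNReal.ofReal (C * b ^ q * ρ + 1) := by
  obtain ⟨δ, hδ, htr⟩ := exists_transversality hb hl
  obtain ⟨P, hP⟩ := exists_nat_gt (160 / δ)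
  have hP0 : 0 < P := by
    have : (0 : ℝ) < P := lt_trans (by positivity) hP
    exact_mod_cast this
  rw [div_lt_iff₀ hδ] at hP
  have hl2 : 0 < 1 - l := by linarith
  have hl0 : 0 < l := by linarith
  have hb0 : (0 : ℝ) < b := by positivity
  set c : ℝ := 4 * P / δ with hc
  have hc0 : 0 < c := by positivity
  refine ⟨2 * c / (1 - l), by positivity, fun q => ?_⟩
  induction q with
  | zero =>
    intro ρ hρ
    have : Finset.Ioo (-(b : ℤ) ^ 0) ((b : ℤ) ^ 0) = {0} := by
      ext x; simp; omega
    unfold coincidence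
    rw [this, Finset.sum_singleton]
    calc _ ≤ volume (Ico (0 : ℝ) 1) := measure_mono (sep_subset _ _)
      _ = ENNReal.ofReal 1 := by simp
      _ ≤ _ := ENNReal.ofReal_le_ofReal (by simp; positivity)
  | succ q ih =>
    intro ρ hρ
    unfold coincidence
    rw [← Finset.sum_filter_add_sum_filter_not _ (fun a : ℤ => (b : ℤ) ∣ a)]
    have hbz : (0 : ℤ) < b := by positivity
    have h1 : ∑ a ∈ Finset.Ioo (-(b : ℤ) ^ (q + 1)) ((b : ℤ) ^ (q + 1)) with (b : ℤ) ∣ a,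
        volume {x ∈ Ico (0 : ℝ) 1 | |slopeDiff b l (q + 1) a (b ^ (q + 1) * x)| ≤ ρ}
        = coincidence b l q (ρ * (b * l)) := by
      symm
      refine Finset.sum_nbij (fun e => b * e) ?_ ?_ ?_ ?_
      · intro e he
        rw [Finset.mem_Ioo] at he
        rw [Finset.mem_filter, Finset.mem_Ioo, pow_succ]
        refine ⟨⟨by nlinarith, by nlinarith⟩, dvd_mul_right _ _⟩
      · intro x _ y _ hxy
        exact mul_left_cancel₀ hbz.ne' hxy
      · intro a ha
        rw [Finset.mem_coe, Finset.mem_filter, Finset.mem_Ioo, pow_succ] at ha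
        obtain ⟨⟨h1, h2⟩, e, rfl⟩ := ha
        refine ⟨e, ?_, rfl⟩
        rw [Finset.mem_coe, Finset.mem_Ioo]
        constructor <;> nlinarith
      · intro e _
        congr 1
        ext x
        simp only [mem_ofPred_eq, pow_succ']
        rw [mul_assoc, slopeDiff_succ_mul hb, abs_mul, abs_of_pos (inv_mul_pos hb hl),
          inv_mul_le_iff₀ (by positivity), mul_comm ρ]
    have h2 : ∑ a ∈ Finset.Ioo (-(b : ℤ) ^ (q + 1)) ((b : ℤ) ^ (q + 1)) with ¬ (b : ℤ) ∣ a,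
        volume {x ∈ Ico (0 : ℝ) 1 | |slopeDiff b l (q + 1) a (b ^ (q + 1) * x)| ≤ ρ}
        ≤ ENNReal.ofReal (2 * c * b ^ (q + 1) * ρ) := by
      calc _ ≤ ∑ a ∈ Finset.Ioo (-(b : ℤ) ^ (q + 1)) ((b : ℤ) ^ (q + 1)) with ¬ (b : ℤ) ∣ a,
              ENNReal.ofReal (c * ρ) := by
            refine Finset.sum_le_sum fun a ha => ?_
            rw [Finset.mem_filter] at ha
            have := volume_small_values_le (f := slopeDiff b l (q + 1) a)
              (f' := slopeDiffDeriv b l (q + 1) a) hδ (abs_slopeDiff_sub_le hb hl (q + 1) a)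
              (fun z => htr q a z ha.2) (P := P) (by linarith) hP0
              (N := b ^ (q + 1)) (by positivity) ρ
            push_cast at this
            exact this
        _ ≤ ∑ a ∈ Finset.Ioo (-(b : ℤ) ^ (q + 1)) ((b : ℤ) ^ (q + 1)),
              ENNReal.ofReal (c * ρ) :=
            Finset.sum_le_sum_of_subset (Finset.filter_subset _ _)
        _ ≤ ENNReal.ofReal (2 * b ^ (q + 1)) * ENNReal.ofReal (c * ρ) := by
            rw [Finset.sum_const, nsmul_eq_mul, Int.card_Ioo, ← ENNReal.ofReal_natCast]
            gcongr
            have : ((((b : ℤ) ^ (q + 1) - -(b : ℤ) ^ (q + 1) - 1).toNat : ℕ) : ℤ)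
                ≤ 2 * (b : ℤ) ^ (q + 1) := by
              have : 0 < (b : ℤ) ^ (q + 1) := by positivity
              omega
            exact_mod_cast this
        _ = _ := by
            rw [← ENNReal.ofReal_mul (by positivity)]
            ring_nf
    rw [h1]
    refine (add_le_add (ih _ (by positivity)) h2).trans ?_
    rw [← ENNReal.ofReal_add (by positivity) (by positivity)]
    refine ENNReal.ofReal_le_ofReal (le_of_eq ?_)
    field_simp
    ring

/-- The number of inverse branches of order `q` whose slope agrees up to `ρ` with that of the
branch through `x`. -/
def branchCount (b : ℕ) (l : ℝ) (q : ℕ) (ρ x : ℝ) : ENNReal :=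
  ∑ a ∈ Finset.Ioo (-(b : ℤ) ^ q) ((b : ℤ) ^ q),
    {x : ℝ | |slopeDiff b l q a (b ^ q * x)| ≤ ρ}.indicator 1 x

lemma continuous_slopeDiff (q : ℕ) (a : ℤ) : Continuous (slopeDiff b l q a) := by
  unfold slopeDiff slopeSum
  fun_prop

lemma measurableSet_slopeDiff_le (q : ℕ) (a : ℤ) (ρ : ℝ) :
    MeasurableSet {x : ℝ | |slopeDiff b l q a (b ^ q * x)| ≤ ρ} := by
  have := continuous_slopeDiff (b := b) (l := l) q a
  exact measurableSet_le (by fun_prop) measurable_const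

lemma measurable_branchCount (q : ℕ) (ρ : ℝ) : Measurable (branchCount b l q ρ) :=
  Finset.measurable_fun_sum _ fun a _ =>
    measurable_one.indicator (measurableSet_slopeDiff_le q a ρ)

lemma lintegral_branchCount (q : ℕ) (ρ : ℝ) :
    ∫⁻ x in Ico (0 : ℝ) 1, branchCount b l q ρ x = coincidence b l q ρ := by
  unfold branchCount coincidence
  rw [lintegral_finsetSum _ fun a _ => measurable_one.indicator (measurableSet_slopeDiff_le q a ρ)]
  refine Finset.sum_congr rfl fun a _ => ?_
  rw [lintegral_indicator_one (measurableSet_slopeDiff_le q a ρ),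
    Measure.restrict_apply (measurableSet_slopeDiff_le q a ρ), inter_comm]
  rfl

lemma volume_branchCount_gt_le (q : ℕ) (ρ : ℝ) {K : ENNReal} (hK : K ≠ 0) (hK' : K ≠ ⊤) :
    volume {x ∈ Ico (0 : ℝ) 1 | ¬ branchCount b l q ρ x ≤ K} ≤ coincidence b l q ρ / K := by
  rw [← lintegral_branchCount]
  refine le_trans ?_ (meas_ge_le_lintegral_div (measurable_branchCount q ρ).aemeasurable hK hK')
  rw [Measure.restrict_apply (measurableSet_le measurable_const (measurable_branchCount q ρ))]
  refine measure_mono fun x hx => ⟨?_, hx.1⟩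
  exact (not_le.mp hx.2).le

end Coincidences

section Recursion

variable {b : ℕ} {l : ℝ}

lemma lintegral_eq_ofReal_mul_lintegral_div (F : ℝ → ENNReal) {c : ℝ} (hc : 0 < c) :
    ∫⁻ x, F x = ENNReal.ofReal c⁻¹ * ∫⁻ x, F (x / c) := by
  have hc' : c⁻¹ ≠ 0 := by positivity
  have h := Real.smul_map_volume_mul_left hc'
  conv_lhs => rw [← h]
  rw [lintegral_smul_measure, abs_of_pos (by positivity), smul_eq_mul]
  congr 1
  have := lintegral_map_equiv (μ := volume) F (Homeomorph.mulLeft₀ c⁻¹ hc').toMeasurableEquiv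
  simp only [Homeomorph.toMeasurableEquiv_coe, Homeomorph.coe_mulLeft₀] at this
  rw [this]
  simp only [div_eq_inv_mul]

lemma setLIntegral_eq_ofReal_mul_setLIntegral_div {S S' : Set ℝ} (hS : MeasurableSet S)
    (hS' : MeasurableSet S') (F : ℝ → ENNReal) {c : ℝ} (hc : 0 < c)
    (h : ∀ x, x / c ∈ S ↔ x ∈ S') :
    ∫⁻ x in S, F x = ENNReal.ofReal c⁻¹ * ∫⁻ x in S', F (x / c) := by
  rw [← lintegral_indicator hS, ← lintegral_indicator hS',
    lintegral_eq_ofReal_mul_lintegral_div _ hc]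
  congr 2
  ext x
  by_cases hx : x ∈ S'
  · rw [indicator_of_mem hx, indicator_of_mem ((h x).mpr hx)]
  · rw [indicator_of_notMem hx, indicator_of_notMem (fun h' => hx ((h x).mp h'))]

lemma setLIntegral_Ico_nat {F : ℝ → ENNReal} (hF : Measurable F) (N : ℕ) :
    ∫⁻ x in Ico (0 : ℝ) N, F x
      = ∫⁻ u in Ico (0 : ℝ) 1, ∑ a ∈ Finset.range N, F (u + a) := by
  rw [lintegral_finsetSum _ fun a _ => by fun_prop]
  induction N with
  | zero => simp
  | succ N ih =>
    have : Ico (0 : ℝ) (N + 1 : ℕ) = Ico 0 (N : ℝ) ∪ Ico (N : ℝ) (N + 1 : ℕ) :=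
      (Ico_union_Ico_eq_Ico (by positivity) (by push_cast; linarith)).symm
    rw [this, lintegral_union measurableSet_Ico (Ico_disjoint_Ico_same), ih,
      Finset.sum_range_succ]
    congr 1
    rw [← lintegral_indicator measurableSet_Ico, ← lintegral_indicator measurableSet_Ico,
      ← lintegral_add_right_eq_self _ (N : ℝ)]
    congr 1
    ext u
    have e : u + N ∈ Ico (N : ℝ) (N + 1 : ℕ) ↔ u ∈ Ico (0 : ℝ) 1 := by
      simp only [mem_Ico]; push_cast
      constructor <;> rintro ⟨h1, h2⟩ <;> constructor <;> linarith
    by_cases hu : u ∈ Ico (0 : ℝ) 1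
    · rw [indicator_of_mem hu, indicator_of_mem (e.mpr hu)]
    · rw [indicator_of_notMem hu, indicator_of_notMem (fun hv => hu (e.mp hv))]

/-- Unfolding of the integral over the unit interval along the `N` inverse branches of
`x ↦ N x mod 1`. -/
lemma lintegral_unfold {F : ℝ → ENNReal} (hF : Measurable F) {N : ℕ} (hN : 0 < N) :
    ∫⁻ x in Ico (0 : ℝ) 1, F x
      = ENNReal.ofReal (N : ℝ)⁻¹ *
        ∫⁻ u in Ico (0 : ℝ) 1, ∑ a ∈ Finset.range N, F ((u + a) / N) := by
  have hN' : (0 : ℝ) < N := by exact_mod_cast hN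
  rw [setLIntegral_eq_ofReal_mul_setLIntegral_div measurableSet_Ico
    (measurableSet_Ico (a := (0 : ℝ)) (b := (N : ℝ))) F hN', 
    setLIntegral_Ico_nat (F := fun x => F (x / N)) (by fun_prop)]
  intro x
  simp only [mem_Ico]
  rw [div_lt_one hN', le_div_iff₀ hN', zero_mul]

lemma volume_fract_mul_mem {E : Set ℝ} (hE : MeasurableSet E) {N : ℕ} (hN : 0 < N) :
    volume {x ∈ Ico (0 : ℝ) 1 | Int.fract (N * x) ∈ E} = volume {x ∈ Ico (0 : ℝ) 1 | x ∈ E} := by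
  have hN' : (0 : ℝ) < N := by exact_mod_cast hN
  have hE' : MeasurableSet {x : ℝ | Int.fract (N * x) ∈ E} :=
    (measurable_fract.comp (measurable_const.mul measurable_id)) hE
  have e1 : volume {x ∈ Ico (0 : ℝ) 1 | Int.fract (N * x) ∈ E}
      = ∫⁻ x in Ico (0 : ℝ) 1, {x : ℝ | Int.fract (N * x) ∈ E}.indicator 1 x := by
    rw [lintegral_indicator_one hE', Measure.restrict_apply hE', inter_comm]; rfl
  have e2 : volume {x ∈ Ico (0 : ℝ) 1 | x ∈ E} = ∫⁻ x in Ico (0 : ℝ) 1, E.indicator 1 x := by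
    rw [lintegral_indicator_one hE, Measure.restrict_apply hE, inter_comm]; rfl
  rw [e1, e2, lintegral_unfold (measurable_one.indicator hE') hN]
  have : ∀ u ∈ Ico (0 : ℝ) 1, ∑ a ∈ Finset.range N,
      {x : ℝ | Int.fract (N * x) ∈ E}.indicator (1 : ℝ → ENNReal) ((u + a) / N)
      = N * E.indicator 1 u := by
    intro u hu
    have : ∀ a : ℕ, {x : ℝ | Int.fract (N * x) ∈ E}.indicator (1 : ℝ → ENNReal) ((u + a) / N)
        = E.indicator 1 u := by
      intro a
      have hfr : Int.fract ((N : ℝ) * ((u + a) / N)) = u := by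
        rw [mul_div_cancel₀ _ hN'.ne', Int.fract_add_natCast, Int.fract_eq_self.mpr hu]
      have hiff : (u + a) / N ∈ {x : ℝ | Int.fract (N * x) ∈ E} ↔ u ∈ E := by
        rw [mem_ofPred_eq, hfr]
      by_cases h : u ∈ E
      · rw [indicator_of_mem h, indicator_of_mem (hiff.mpr h)]; rfl
      · rw [indicator_of_notMem h, indicator_of_notMem (fun h' => h (hiff.mp h'))]
    simp [this]
  rw [setLIntegral_congr_fun measurableSet_Ico this, lintegral_const_mul _
    (measurable_one.indicator hE), ← mul_assoc, ENNReal.ofReal_inv_of_pos hN',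
    ENNReal.ofReal_natCast, ENNReal.inv_mul_cancel (by exact_mod_cast hN.ne') (by simp), one_mul]

/-- Increments of size comparable to `b ^ (-n)`. -/
def annulus (b n : ℕ) : Set ℝ := {t | ((b : ℝ) ^ (n + 1))⁻¹ < |t| ∧ |t| ≤ ((b : ℝ) ^ n)⁻¹}

lemma measurableSet_annulus (n : ℕ) : MeasurableSet (annulus b n) :=
  (measurableSet_lt measurable_const measurable_id.abs).inter
    (measurableSet_le measurable_id.abs measurable_const)

/-- The points of `H` at which the increment `t` changes the Weierstrass function by at
most `r`. -/
def closeSet (b : ℕ) (l r : ℝ) (H : Set ℝ) (t : ℝ) : Set ℝ :=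
  {x | x ∈ H ∧ |Wc b l (x + t) - Wc b l x| ≤ r}

/-- The measure of the pairs of points at distance comparable to `b ^ (-n)` whose heights
differ by at most `r`, the first point lying in `H`. -/
def pairMass (b : ℕ) (l : ℝ) (n : ℕ) (r : ℝ) (H : Set ℝ) : ENNReal :=
  ∫⁻ t in annulus b n, ∫⁻ x in Ico (0 : ℝ) 1, (closeSet b l r H t).indicator 1 x

lemma measurableSet_closeSet (hl : 0.99 < l) (hl1 : l < 1) (r : ℝ) {H : Set ℝ}
    (hH : MeasurableSet H) (t : ℝ) : MeasurableSet (closeSet b l r H t) := by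
  have := continuous_Wc (b := b) hl hl1
  have hm : Measurable fun x => |Wc b l (x + t) - Wc b l x| := by fun_prop
  exact hH.inter (measurableSet_le hm measurable_const)

set_option maxHeartbeats 1000000 in
/-- Inverse branches along which a given increment stays small have nearly equal slopes, hence
their number is controlled by `branchCount`. -/
lemma sum_indicator_closeSet_le (hb : 2 ≤ b) (hl : 0.99 < l) (hl1 : l < 1) {q k : ℕ} {r ρ : ℝ}
    (hr : r ≤ 2 / (1 - l) * (l ^ q / (b ^ k) ^ 2))
    (hρ : (2 / (1 - l) + 20) * b / b ^ k ≤ ρ) {K : ENNReal} {H H' : Set ℝ}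
    (hK : ∀ x ∈ H, branchCount b l q ρ x ≤ K) (hH' : ∀ x ∈ H, Int.fract ((b : ℝ) ^ q * x) ∈ H')
    {s u : ℝ} (hs : s ∈ annulus b k) (hu : u ∈ Ico (0 : ℝ) 1) :
    ∑ a ∈ Finset.range (b ^ q),
        (closeSet b l r H (s / b ^ q)).indicator (1 : ℝ → ENNReal) ((u + a) / b ^ q)
      ≤ K * (closeSet b l (2 / (1 - l) * ((b : ℝ) ^ k)⁻¹) H' s).indicator 1 u := by
  have hb' : (2 : ℝ) ≤ b := by exact_mod_cast hb
  have hl0 : 0 < l := by linarith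
  have hbq : (0 : ℝ) < b ^ q := by positivity
  have hbk : (0 : ℝ) < b ^ k := by positivity
  have hlq : 0 < l ^ q := by positivity
  set c : ℝ := 2 / (1 - l) with hc
  have hc200 : 200 ≤ c := by
    rw [hc, le_div_iff₀ (by linarith)]; linarith
  set κ : ℝ := ((b : ℝ) ^ k)⁻¹ with hκ
  have hκ0 : 0 < κ := by positivity
  have hκ1 : κ ≤ 1 := inv_le_one_of_one_le₀ (one_le_pow₀ (by linarith))
  obtain ⟨hs1, hs2⟩ := hs
  have hs2' : s ^ 2 ≤ κ ^ 2 := by rw [← sq_abs]; gcongr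
  -- the expansion of an increment along a branch in the sum
  have expand : ∀ a : ℕ, (u + a) / b ^ q ∈ closeSet b l r H (s / b ^ q) →
      |(Wc b l (u + s) - Wc b l u) - 2 * π * s * slopeSum b l q (u + a)| ≤ (c + 20) * κ ^ 2 := by
    rintro a ⟨_, ha⟩
    have h1 := abs_Wc_increment_le hb hl hl1 q (u + a) s
    have e1 : Wc b l (u + a + s) = Wc b l (u + s) := by
      have := Wc_add_int (b := b) (l := l) (u + s) a
      rw [← this]; push_cast; ring_nf
    have e2 : Wc b l (u + a) = Wc b l u := by
      have := Wc_add_int (b := b) (l := l) u a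
      rw [← this]; push_cast; ring_nf
    rw [e1, e2, add_div (u + a) s] at h1
    have h2 : |(Wc b l ((u + a) / b ^ q + s / b ^ q) - Wc b l ((u + a) / b ^ q)) / l ^ q|
        ≤ c * κ ^ 2 := by
      rw [abs_div, abs_of_pos hlq, div_le_iff₀ hlq]
      refine (ha.trans hr).trans (le_of_eq ?_)
      rw [hκ]; field_simp
    rw [abs_le] at *
    constructor <;> nlinarith
  by_cases hne : ∃ a0 ∈ Finset.range (b ^ q), (u + (a0 : ℕ)) / b ^ q ∈ closeSet b l r H (s / b ^ q)
  swap
  · rw [Finset.sum_eq_zero]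
    · exact zero_le
    · intro a ha
      exact indicator_of_notMem (fun h => hne ⟨a, ha, h⟩) _
  obtain ⟨a0, ha0, hx0⟩ := hne
  have hE0 := expand a0 hx0
  have hmem : u ∈ closeSet b l (c * κ) H' s := by
    refine ⟨?_, ?_⟩
    · have := hH' _ hx0.1
      rwa [mul_div_cancel₀ _ hbq.ne', Int.fract_add_natCast, Int.fract_eq_self.mpr hu] at this
    · rcases Nat.eq_zero_or_pos k with hk | hk
      · have : κ = 1 := by rw [hκ, hk]; simp
        rw [this, mul_one, hc]
        refine (abs_sub _ _).trans ?_
        have h1 := abs_Wc_le (b := b) hl hl1 (u + s)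
        have h2 := abs_Wc_le (b := b) hl hl1 u
        rw [div_eq_mul_inv]
        linarith
      · have hκ2 : κ ≤ 1 / 2 := by
          rw [hκ, inv_le_comm₀ hbk (by norm_num)]
          calc _ = (2 : ℝ) ^ 1 := by norm_num
            _ ≤ (2 : ℝ) ^ k := pow_le_pow_right₀ (by norm_num) hk
            _ ≤ (b : ℝ) ^ k := by gcongr
        have h3 : |2 * π * s * slopeSum b l q (u + a0)| ≤ 14 * κ := by
          rw [abs_mul, abs_mul, abs_of_pos (by positivity : 0 < 2 * π)]
          calc 2 * π * |s| * |slopeSum b l q (u + a0)| ≤ 2 * 3.5 * κ * 2 := by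
                gcongr
                · linarith [pi_lt_d2]
                · exact abs_slopeSum_le hb hl _ _
            _ = 14 * κ := by ring
        have h4 : |Wc b l (u + s) - Wc b l u| ≤ (c + 20) * κ ^ 2 + 14 * κ := by
          have := abs_sub_abs_le_abs_sub (Wc b l (u + s) - Wc b l u)
            (2 * π * s * slopeSum b l q (u + a0))
          linarith
        have h5 : (c + 20) * κ * κ ≤ (c + 20) * κ * (1 / 2) := by gcongr
        have h6 : 200 * κ ≤ c * κ := by gcongr
        linarith
  rw [indicator_of_mem hmem, Pi.one_apply, mul_one]
  refine le_trans ?_ (hK _ hx0.1)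
  unfold branchCount
  have hinj : Set.InjOn (fun a : ℕ => (a : ℤ) - a0) (Finset.range (b ^ q)) := by
    intro x _ y _ h; simpa using h
  calc _ ≤ ∑ a ∈ Finset.range (b ^ q),
        {x : ℝ | |slopeDiff b l q ((a : ℤ) - a0) (b ^ q * x)| ≤ ρ}.indicator (1 : ℝ → ENNReal)
          ((u + a0) / b ^ q) := by
        refine Finset.sum_le_sum fun a _ => ?_
        by_cases hxa : (u + a) / b ^ q ∈ closeSet b l r H (s / b ^ q)
        swap
        · rw [indicator_of_notMem hxa]; exact zero_le
        have hEa := expand a hxa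
        rw [indicator_of_mem hxa, indicator_of_mem]
        · rfl
        rw [mem_ofPred_eq, mul_div_cancel₀ _ hbq.ne']
        unfold slopeDiff
        push_cast
        rw [show u + a0 + ((a : ℝ) - a0) = u + a by ring]
        set d := slopeSum b l q (u + a) - slopeSum b l q (u + a0) with hd
        have h1 : |2 * π * s * d| ≤ 2 * ((c + 20) * κ ^ 2) := by
          rw [abs_le] at *
          rw [hd]
          constructor <;> nlinarith
        rw [abs_mul, abs_mul, abs_of_pos (by positivity : 0 < 2 * π)] at h1
        refine le_trans ?_ hρ
        have hs3 : κ ≤ |s| * b := by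
          have : κ / b ≤ |s| := by
            refine le_of_eq_of_le ?_ hs1.le
            rw [hκ, pow_succ]; field_simp
          rwa [div_le_iff₀ (by positivity)] at this
        have h2 : κ * |d| ≤ (c + 20) * b * κ ^ 2 := by
          calc κ * |d| ≤ |s| * b * |d| := by gcongr
            _ = b * (1 * |s| * |d|) := by ring
            _ ≤ b * (π * |s| * |d|) := by gcongr; linarith [pi_gt_three]
            _ ≤ b * ((c + 20) * κ ^ 2) := mul_le_mul_of_nonneg_left (by linarith) (by positivity)
            _ = _ := by ring
        have h3 : κ * |d| ≤ κ * ((c + 20) * b * κ) := by linarith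
        have h4 := le_of_mul_le_mul_left h3 hκ0
        rw [hκ] at h4
        rwa [div_eq_mul_inv]
    _ = ∑ a ∈ (Finset.range (b ^ q)).image (fun a : ℕ => (a : ℤ) - a0),
        {x : ℝ | |slopeDiff b l q a (b ^ q * x)| ≤ ρ}.indicator (1 : ℝ → ENNReal)
          ((u + a0) / b ^ q) := by
        rw [Finset.sum_image hinj]
    _ ≤ _ := by
        refine Finset.sum_le_sum_of_subset ?_
        intro e he
        obtain ⟨a, ha, rfl⟩ := Finset.mem_image.mp he
        rw [Finset.mem_range] at ha ha0
        rw [Finset.mem_Ioo]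
        have h1 : (a : ℤ) < (b : ℤ) ^ q := by exact_mod_cast ha
        have h2 : (a0 : ℤ) < (b : ℤ) ^ q := by exact_mod_cast ha0
        omega

/-- The multi-scale recursion for the pair masses. -/
lemma pairMass_le (hb : 2 ≤ b) (hl : 0.99 < l) (hl1 : l < 1) {q k : ℕ} {r ρ : ℝ}
    (hr : r ≤ 2 / (1 - l) * (l ^ q / (b ^ k) ^ 2))
    (hρ : (2 / (1 - l) + 20) * b / b ^ k ≤ ρ) {K : ENNReal} (hKtop : K ≠ ⊤) {H H' : Set ℝ}
    (hH : MeasurableSet H)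
    (hK : ∀ x ∈ H, branchCount b l q ρ x ≤ K) (hH' : ∀ x ∈ H, Int.fract ((b : ℝ) ^ q * x) ∈ H') :
    pairMass b l (q + k) r H ≤
      ENNReal.ofReal (((b : ℝ) ^ q)⁻¹ * ((b : ℝ) ^ q)⁻¹) * K *
        pairMass b l k (2 / (1 - l) * ((b : ℝ) ^ k)⁻¹) H' := by
  have hb' : (2 : ℝ) ≤ b := by exact_mod_cast hb
  have hbq : (0 : ℝ) < b ^ q := by positivity
  unfold pairMass
  rw [setLIntegral_eq_ofReal_mul_setLIntegral_div (measurableSet_annulus (q + k))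
    (measurableSet_annulus k) _ hbq, ENNReal.ofReal_mul (by positivity)]
  · rw [mul_assoc, mul_assoc]
    gcongr
    rw [← lintegral_const_mul' _ _ hKtop, ← lintegral_const_mul' _ _ ENNReal.ofReal_ne_top]
    refine setLIntegral_mono' (measurableSet_annulus k) fun s hs => ?_
    have := lintegral_unfold (F := (closeSet b l r H (s / b ^ q)).indicator 1)
      (measurable_one.indicator (measurableSet_closeSet hl hl1 r hH _)) (N := b ^ q) (by positivity)
    push_cast at this
    rw [this]
    gcongr
    rw [← lintegral_const_mul' _ _ hKtop]
    exact setLIntegral_mono' measurableSet_Ico fun u hu =>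
      sum_indicator_closeSet_le hb hl hl1 hr hρ hK hH' hs hu
  · intro t
    have e : ∀ n : ℕ, ((b : ℝ) ^ (q + n))⁻¹ = ((b : ℝ) ^ n)⁻¹ / b ^ q := by
      intro n; rw [pow_add]; field_simp
    simp only [annulus, mem_ofPred_eq, abs_div, abs_of_pos hbq]
    rw [add_assoc, e, e, div_lt_div_iff_of_pos_right hbq, div_le_div_iff_of_pos_right hbq]

end Recursion

section Iteration

variable {b : ℕ} {l : ℝ}

/-- A power saving `b ^ (-n * (1 + θ))` for the pair masses, off exceptional sets whose measures
decay exponentially. -/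
def PairBound (b : ℕ) (l θ : ℝ) : Prop :=
  ∃ C > (0 : ℝ), ∃ c > (0 : ℝ), ∀ n i : ℕ, n ≤ i → i ≤ 2 * n → ∃ H : Set ℝ, MeasurableSet H ∧
    volume {x ∈ Ico (0 : ℝ) 1 | x ∉ H} ≤ ENNReal.ofReal (C * (b : ℝ) ^ (-(c * n))) ∧
    pairMass b l i (2 / (1 - l) * ((b : ℝ) ^ n)⁻¹) H ≤
      ENNReal.ofReal (C * (b : ℝ) ^ (-(n * (1 + θ))))

lemma pairMass_le_volume (i : ℕ) (r : ℝ) (H : Set ℝ) :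
    pairMass b l i r H ≤ ENNReal.ofReal (2 * ((b : ℝ) ^ i)⁻¹) := by
  have h1 : pairMass b l i r H ≤ ∫⁻ _ in annulus b i, 1 := by
    refine lintegral_mono fun t => ?_
    calc _ ≤ ∫⁻ _ in Ico (0 : ℝ) 1, (1 : ENNReal) :=
          lintegral_mono fun x => indicator_le_self' (fun _ _ => zero_le) x
      _ = 1 := by simp
  refine h1.trans ?_
  rw [setLIntegral_one]
  calc volume (annulus b i) ≤ volume (Icc (-((b : ℝ) ^ i)⁻¹) (((b : ℝ) ^ i)⁻¹)) :=
        measure_mono fun t ht => abs_le.mp ht.2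
    _ = _ := by rw [Real.volume_Icc]; congr 1; ring

lemma pairBound_zero (hb : 2 ≤ b) : PairBound b l 0 := by
  have hb' : (1 : ℝ) ≤ b := by exact_mod_cast (by omega : 1 ≤ b)
  refine ⟨2, by norm_num, 1, by norm_num, fun n i hni _ => ⟨univ, .univ, by simp, ?_⟩⟩
  refine (pairMass_le_volume i _ _).trans (ENNReal.ofReal_le_ofReal ?_)
  rw [add_zero, mul_one, rpow_neg (by positivity), rpow_natCast]
  gcongr

lemma PairBound.mono (hb : 2 ≤ b) {θ θ' : ℝ} (h : θ' ≤ θ) (hθ : PairBound b l θ) :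
    PairBound b l θ' := by
  have hb' : (1 : ℝ) ≤ b := by exact_mod_cast (by omega : 1 ≤ b)
  obtain ⟨C, hC, c, hc, H⟩ := hθ
  refine ⟨C, hC, c, hc, fun n i hni hin => ?_⟩
  obtain ⟨S, hS, hS1, hS2⟩ := H n i hni hin
  refine ⟨S, hS, hS1, hS2.trans (ENNReal.ofReal_le_ofReal ?_)⟩
  gcongr

set_option maxHeartbeats 1000000 in
/-- One step of the bootstrap: a saving `θ` at small scales improves the saving. -/
lemma PairBound.step (hb : 2 ≤ b) (hl : 0.99 < l) (hl1 : l < 1) {α : ℝ}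
    (hα : l = (b : ℝ) ^ (-α)) (hα0 : 0 < α) (hα1 : α ≤ 1 / 4) {θ ε : ℝ} (hε0 : 0 < ε)
    (hε1 : ε < 1) (hθ0 : 0 ≤ θ) (hθ1 : θ ≤ 1 - α) (hθ : PairBound b l θ) :
    PairBound b l ((1 - α) / (2 - α) * (1 - ε + θ)) := by
  have hb' : (1 : ℝ) < b := by exact_mod_cast (by omega : 1 < b)
  have hb0 : (0 : ℝ) < b := by linarith
  obtain ⟨C, hC, c, hc, hyp⟩ := hθ
  obtain ⟨C₁, hC₁, hco⟩ := exists_coincidence_le hb hl hl1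
  set D := (2 / (1 - l) + 20) * b with hD
  have hD0 : 0 < D := by
    have : 0 < 1 - l := by linarith
    positivity
  set γ := min ε c with hγ
  have hγ0 : 0 < γ := lt_min hε0 hc
  set σ := 1 - ε + θ with hσ
  have hσ0 : 0 < σ := by linarith
  have hσ1 : σ ≤ 2 - α := by linarith
  refine ⟨(C₁ * D + 1 + C) * b ^ γ + C * b ^ σ, by positivity, γ / 4, by positivity,
    fun n i hni hin => ?_⟩
  have hni' : (n : ℝ) ≤ i := by exact_mod_cast hni
  have hin' : (i : ℝ) ≤ 2 * n := by exact_mod_cast hin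
  have hn0 : (0 : ℝ) ≤ n := by positivity
  set x := (n - α * i) / (2 - α) with hx
  have h2α : 0 < 2 - α := by linarith
  have hxe : x * (2 - α) = n - α * i := by rw [hx]; field_simp
  have hxn : (n : ℝ) / 4 ≤ x := by
    rw [hx, le_div_iff₀ h2α]
    nlinarith
  have hx0 : 0 ≤ x := by linarith
  set k := ⌊x⌋₊ with hk
  have hk1 : (k : ℝ) ≤ x := Nat.floor_le hx0
  have hk2 : x < k + 1 := Nat.lt_floor_add_one x
  have hk0 : (0 : ℝ) ≤ k := by positivity
  have hkn : (k : ℝ) ≤ i := by nlinarith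
  have h2k : 2 * (k : ℝ) ≤ i := by nlinarith
  have hki : k ≤ i := by exact_mod_cast hkn
  clear_value k x
  clear hk
  obtain ⟨q, rfl⟩ : ∃ q, i = q + k := ⟨i - k, by omega⟩
  push_cast at *
  have hqk : (k : ℝ) ≤ q := by linarith
  have hexp : α * q + 2 * k ≤ n := by nlinarith
  set ρ := D / b ^ k with hρ
  have hρ0 : 0 ≤ ρ := by positivity
  set K := (b : ℝ) ^ (q - k * (1 - ε) : ℝ) with hK
  have hK0 : 0 < K := by positivity
  obtain ⟨H, hHm, hH1, hH2⟩ := hyp k k le_rfl (by omega)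
  have hm1 : MeasurableSet {x | branchCount b l q ρ x ≤ ENNReal.ofReal K} :=
    measurableSet_le (measurable_branchCount q ρ) measurable_const
  have hm2 : MeasurableSet {x : ℝ | Int.fract ((b : ℝ) ^ q * x) ∈ H} :=
    (measurable_fract.comp (measurable_const.mul measurable_id)) hHm
  refine ⟨_, hm1.inter hm2, ?_, ?_⟩
  · have hsub : {x ∈ Ico (0 : ℝ) 1 | x ∉ {x | branchCount b l q ρ x ≤ ENNReal.ofReal K} ∩
          {x : ℝ | Int.fract ((b : ℝ) ^ q * x) ∈ H}} ⊆
        {x ∈ Ico (0 : ℝ) 1 | ¬ branchCount b l q ρ x ≤ ENNReal.ofReal K} ∪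
        {x ∈ Ico (0 : ℝ) 1 | Int.fract (((b ^ q : ℕ) : ℝ) * x) ∈ Hᶜ} := by
      rintro x ⟨hx1, hx2⟩
      by_cases h : branchCount b l q ρ x ≤ ENNReal.ofReal K
      · refine Or.inr ⟨hx1, fun h' => hx2 ⟨h, ?_⟩⟩
        push_cast at h'
        exact h'
      · exact Or.inl ⟨hx1, h⟩
    refine (measure_mono hsub).trans ((measure_union_le _ _).trans ?_)
    rw [volume_fract_mul_mem hHm.compl (by positivity)]
    have hA : volume {x ∈ Ico (0 : ℝ) 1 | ¬ branchCount b l q ρ x ≤ ENNReal.ofReal K} ≤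
        ENNReal.ofReal ((C₁ * D + 1) * (b : ℝ) ^ (-(γ * k))) := by
      refine (volume_branchCount_gt_le q ρ (by simpa using hK0) ENNReal.ofReal_ne_top).trans ?_
      refine (ENNReal.div_le_div_right (hco q ρ hρ0) _).trans ?_
      rw [← ENNReal.ofReal_div_of_pos hK0]
      refine ENNReal.ofReal_le_ofReal ?_
      rw [div_le_iff₀ hK0, mul_assoc (C₁ * D + 1), hK, ← rpow_add hb0]
      have e1 : (b : ℝ) ^ q * ρ = D * (b : ℝ) ^ (q - k : ℝ) := by
        rw [rpow_sub hb0, rpow_natCast, rpow_natCast, hρ]; ring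
      have e2 : (b : ℝ) ^ (q - k : ℝ) ≤ (b : ℝ) ^ (-(γ * k) + (q - k * (1 - ε))) := by
        refine rpow_le_rpow_of_exponent_le hb'.le ?_
        have : γ * k ≤ ε * k := mul_le_mul_of_nonneg_right (min_le_left _ _) hk0
        linarith
      have e3 : 1 ≤ (b : ℝ) ^ (q - k : ℝ) := one_le_rpow hb'.le (by linarith)
      rw [mul_assoc C₁, e1]
      have e4 : C₁ * D * (b : ℝ) ^ (q - k : ℝ) ≤
        C₁ * D * (b : ℝ) ^ (-(γ * k) + (q - k * (1 - ε))) := by gcongr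
      linarith
    have hB : volume {x ∈ Ico (0 : ℝ) 1 | x ∈ Hᶜ} ≤
        ENNReal.ofReal (C * (b : ℝ) ^ (-(γ * k))) := by
      refine hH1.trans (ENNReal.ofReal_le_ofReal ?_)
      gcongr
      · exact hb'.le
      · exact min_le_right _ _
    refine (add_le_add hA hB).trans ?_
    rw [← ENNReal.ofReal_add (by positivity) (by positivity)]
    refine ENNReal.ofReal_le_ofReal ?_
    have e5 : (b : ℝ) ^ (-(γ * k)) ≤ b ^ γ * (b : ℝ) ^ (-(γ / 4 * n)) := by
      rw [← rpow_add hb0]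
      refine rpow_le_rpow_of_exponent_le hb'.le ?_
      nlinarith
    calc _ = (C₁ * D + 1 + C) * (b : ℝ) ^ (-(γ * k)) := by ring
      _ ≤ (C₁ * D + 1 + C) * (b ^ γ * (b : ℝ) ^ (-(γ / 4 * n))) := by gcongr
      _ = ((C₁ * D + 1 + C) * b ^ γ + 0) * (b : ℝ) ^ (-(γ / 4 * n)) := by ring
      _ ≤ _ := by gcongr; positivity
  · have hr : 2 / (1 - l) * ((b : ℝ) ^ n)⁻¹ ≤ 2 / (1 - l) * (l ^ q / (b ^ k) ^ 2) := by
      have : 0 < 1 - l := by linarith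
      gcongr
      rw [hα, ← rpow_natCast, ← rpow_natCast, ← rpow_natCast, ← rpow_natCast, ← rpow_mul hb0.le,
        ← rpow_mul hb0.le, ← rpow_sub hb0, ← rpow_neg hb0.le]
      refine rpow_le_rpow_of_exponent_le hb'.le ?_
      push_cast
      linarith
    refine (pairMass_le hb hl hl1 hr le_rfl (K := ENNReal.ofReal K) ENNReal.ofReal_ne_top
      (hm1.inter hm2) (fun x hx => hx.1) (fun x hx => hx.2)).trans ?_
    refine (mul_le_mul_right hH2 _).trans ?_
    rw [← ENNReal.ofReal_mul (by positivity), ← ENNReal.ofReal_mul (by positivity)]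
    refine ENNReal.ofReal_le_ofReal ?_
    have e1 : ((b : ℝ) ^ q)⁻¹ * ((b : ℝ) ^ q)⁻¹ * K * (C * (b : ℝ) ^ (-(k * (1 + θ)))) =
        C * (b : ℝ) ^ (-(q + k + k * σ)) := by
      rw [hK, ← rpow_natCast, ← rpow_neg hb0.le, ← rpow_add hb0, ← rpow_add hb0,
        mul_left_comm, ← rpow_add hb0, hσ]
      congr 2
      ring
    rw [e1]
    have e2 : (b : ℝ) ^ (-(q + k + k * σ)) ≤
        b ^ σ * (b : ℝ) ^ (-(n * (1 + (1 - α) / (2 - α) * σ))) := by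
      rw [← rpow_add hb0]
      refine rpow_le_rpow_of_exponent_le hb'.le ?_
      have e3 : x * σ ≤ (k + 1) * σ := mul_le_mul_of_nonneg_right hk2.le hσ0.le
      have e4 : n * (1 + (1 - α) / (2 - α) * σ) ≤ q + k + x * σ := by
        have : (q + k + x * σ) - n * (1 + (1 - α) / (2 - α) * σ) =
          (q + k - n) * (1 - σ / (2 - α) * α) := by
          rw [hx]; field_simp; ring
        have h5 : σ / (2 - α) ≤ 1 := (div_le_one h2α).mpr hσ1
        have h6 : 0 ≤ (q + k - n) * (1 - σ / (2 - α) * α) := by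
          refine mul_nonneg (by linarith) ?_
          have := mul_le_mul_of_nonneg_right h5 hα0.le
          linarith
        linarith
      linarith
    calc _ ≤ C * (b ^ σ * (b : ℝ) ^ (-(n * (1 + (1 - α) / (2 - α) * σ)))) := by gcongr
      _ = (0 + C * b ^ σ) * (b : ℝ) ^ (-(n * (1 + (1 - α) / (2 - α) * σ))) := by ring
      _ ≤ _ := by gcongr; positivity

lemma pairBound_of_lt (hb : 2 ≤ b) (hl : 0.99 < l) (hl1 : l < 1) {α : ℝ}
    (hα : l = (b : ℝ) ^ (-α)) (hα0 : 0 < α) (hα1 : α ≤ 1 / 4) {θ : ℝ} (hθ : θ < 1 - α) :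
    PairBound b l θ := by
  set τ := (1 - α) / (2 - α) with hτ
  have hτ0 : 0 < τ := div_pos (by linarith) (by linarith)
  have hτ1 : τ < 1 := by rw [hτ, div_lt_one (by linarith)]; linarith
  have iter : ∀ ε, 0 < ε → ε < 1 → ∀ j : ℕ, PairBound b l ((1 - α) * (1 - ε) * (1 - τ ^ j)) := by
    intro ε hε0 hε1 j
    induction j with
    | zero => simpa using pairBound_zero hb
    | succ j ih =>
      have hj0 : 0 ≤ τ ^ j := by positivity
      have hj1 : τ ^ j ≤ 1 := pow_le_one₀ hτ0.le hτ1.le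
      have h1 : 0 ≤ (1 - α) * (1 - ε) := mul_nonneg (by linarith) (by linarith)
      have h2 := ih.step hb hl hl1 hα hα0 hα1 hε0 hε1 (mul_nonneg h1 (by linarith)) (by nlinarith)
      convert h2 using 1
      rw [← hτ, pow_succ]
      have : τ * (2 - α) = 1 - α := by
        rw [hτ]; exact div_mul_cancel₀ _ (by linarith)
      linear_combination (-(1 - ε)) * this
  have hlim : Tendsto (fun j : ℕ => (1 - α) * (1 - (1 / 2 : ℝ) ^ (j + 1)) * (1 - τ ^ j)) atTop
      (nhds ((1 - α) * (1 - 0) * (1 - 0))) := by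
    refine ((tendsto_const_nhds.sub ?_).const_mul _).mul (tendsto_const_nhds.sub ?_)
    · exact (tendsto_add_atTop_iff_nat 1).mpr
        (tendsto_pow_atTop_nhds_zero_of_lt_one (by norm_num) (by norm_num))
    · exact tendsto_pow_atTop_nhds_zero_of_lt_one hτ0.le hτ1
  obtain ⟨j, hj⟩ := (hlim.eventually_const_lt (by linarith : θ < _)).exists
  exact (iter _ (by positivity) (pow_lt_one₀ (by norm_num) (by norm_num) (by simp)) j).mono hb hj.le

end Iteration

section LowerBound

/-- The mass distribution principle for graphs: an upper bound for the mass of the points of the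
graph near each point of a set of positive measure bounds the dimension from below. -/
lemma le_dimH_graph {f : ℝ → ℝ} (hf : Measurable f) {B : ℝ} (hB : 1 < B) {d : NNReal} {N : ℕ}
    {A : ℝ} (hA : 0 < A) {S E : Set ℝ} (hE : volume E ≠ 0) (hES : E ⊆ S)
    (h : ∀ x ∈ E, ∀ n ≥ N, volume {t | |t| ≤ (B ^ n)⁻¹ ∧ |f (x + t) - f x| ≤ (B ^ n)⁻¹} ≤
      ENNReal.ofReal (A * B ^ (-(n * d : ℝ)))) :
    (d : ENNReal) ≤ dimH ((fun x => (x, f x)) '' S) := by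
  have hB0 : 0 < B := by linarith
  have hg : Measurable fun x => (x, f x) := measurable_id.prodMk hf
  set ν := Measure.map (fun x => (x, f x)) (volume.restrict E) with hν
  set c : ℝ := A * B ^ (d : ℝ) with hc
  have hc0 : 0 < c := by positivity
  have key : ∀ s : Set (ℝ × ℝ), IsClosed s → Metric.ediam s ≤ ENNReal.ofReal ((B ^ N)⁻¹) →
      ν s ≤ ENNReal.ofReal c * Metric.ediam s ^ (d : ℝ) := by
    intro s hs hdiam
    rw [hν, Measure.map_apply hg hs.measurableSet, Measure.restrict_apply (hg hs.measurableSet)]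
    rcases ((fun x => (x, f x)) ⁻¹' s ∩ E).eq_empty_or_nonempty with h0 | ⟨x, hxs, hxE⟩
    · rw [h0, measure_empty]; exact zero_le
    have hfin : Metric.ediam s ≠ ⊤ := (hdiam.trans_lt ENNReal.ofReal_lt_top).ne
    set δ := (Metric.ediam s).toReal with hδ
    have hδe : Metric.ediam s = ENNReal.ofReal δ := (ENNReal.ofReal_toReal hfin).symm
    have hδ0 : 0 ≤ δ := ENNReal.toReal_nonneg
    have hclose : ∀ y, (y, f y) ∈ s → |y - x| ≤ δ ∧ |f y - f x| ≤ δ := by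
      intro y hy
      have := Metric.edist_le_ediam_of_mem hy hxs
      rw [hδe, Prod.edist_eq, max_le_iff] at this
      simpa only [edist_dist, Real.dist_eq, ENNReal.ofReal_le_ofReal_iff hδ0] using this
    rcases hδ0.eq_or_lt with hz | hpos
    · have : (fun x => (x, f x)) ⁻¹' s ∩ E ⊆ {x} := by
        rintro y ⟨hy, _⟩
        have := (hclose y hy).1
        rw [← hz] at this
        exact sub_eq_zero.mp (abs_nonpos_iff.mp this)
      rw [measure_mono_null this (by simp)]
      exact zero_le
    have hδN : δ ≤ (B ^ N)⁻¹ := by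
      rw [hδe] at hdiam
      exact (ENNReal.ofReal_le_ofReal_iff (by positivity)).mp hdiam
    obtain ⟨n, hn1, hn2⟩ := exists_nat_pow_near_of_lt_one hpos
      (hδN.trans (inv_le_one_of_one_le₀ (one_le_pow₀ hB.le))) (inv_pos.mpr hB0)
      (inv_lt_one_of_one_lt₀ hB)
    rw [inv_pow] at hn1 hn2
    have hnN : N ≤ n := by
      have h1 := (inv_lt_inv₀ (by positivity) (by positivity)).mp (hn1.trans_le hδN)
      have := (pow_lt_pow_iff_right₀ hB).mp h1
      omega
    have hsub : (fun x => (x, f x)) ⁻¹' s ∩ E ⊆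
        (fun y => y + -x) ⁻¹' {t | |t| ≤ (B ^ n)⁻¹ ∧ |f (x + t) - f x| ≤ (B ^ n)⁻¹} := by
      rintro y ⟨hy, _⟩
      obtain ⟨h1, h2⟩ := hclose y hy
      rw [mem_preimage, mem_ofPred_eq, ← sub_eq_add_neg, add_sub_cancel]
      exact ⟨h1.trans hn2, h2.trans hn2⟩
    refine (measure_mono hsub).trans ?_
    rw [measure_preimage_add_right]
    refine (h x hxE n hnN).trans ?_
    rw [hδe, ENNReal.ofReal_rpow_of_pos hpos, ← ENNReal.ofReal_mul hc0.le]
    refine ENNReal.ofReal_le_ofReal ?_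
    have h1 : (B ^ (n + 1))⁻¹ ^ (d : ℝ) ≤ δ ^ (d : ℝ) :=
      rpow_le_rpow (by positivity) hn1.le d.2
    calc A * B ^ (-(n * d : ℝ)) = c * (B ^ (n + 1))⁻¹ ^ (d : ℝ) := by
          rw [hc, mul_assoc, ← rpow_natCast, ← rpow_neg hB0.le, ← rpow_mul hB0.le,
            ← rpow_add hB0]
          congr 2
          push_cast
          ring
      _ ≤ _ := by gcongr
  have hle : (ENNReal.ofReal c)⁻¹ • ν ≤ Measure.hausdorffMeasure (d : ℝ) := by
    refine Measure.le_hausdorffMeasure _ _ (ENNReal.ofReal ((B ^ N)⁻¹))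
      (ENNReal.ofReal_pos.mpr (by positivity)) fun s hs => ?_
    have hc1 : ENNReal.ofReal c ≠ 0 := by simpa using hc0
    have h1 := key (closure s) isClosed_closure (by rwa [Metric.ediam_closure])
    rw [Metric.ediam_closure] at h1
    rw [Measure.smul_apply, smul_eq_mul]
    calc _ ≤ (ENNReal.ofReal c)⁻¹ * (ENNReal.ofReal c * Metric.ediam s ^ (d : ℝ)) := by
          gcongr
          exact (measure_mono subset_closure).trans h1
      _ = _ := by rw [← mul_assoc, ENNReal.inv_mul_cancel hc1 ENNReal.ofReal_ne_top, one_mul]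
  refine le_dimH_of_hausdorffMeasure_ne_zero ?_
  intro h0
  have h1 := hle ((fun x => (x, f x)) '' S)
  rw [h0, Measure.smul_apply, smul_eq_mul, nonpos_iff_eq_zero, mul_eq_zero] at h1
  rcases h1 with h1 | h1
  · simp at h1
  · have h2 := (Measure.le_restrict_apply (μ := volume) E _).trans
      (Measure.le_map_apply hg.aemeasurable ((fun x => (x, f x)) '' S))
    rw [← hν, h1, nonpos_iff_eq_zero] at h2
    refine hE (measure_mono_null ?_ h2)
    exact fun x hx => ⟨⟨x, hES hx, rfl⟩, hx⟩

variable {b : ℕ} {l : ℝ}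

lemma measurable_indicator_closeSet (hl : 0.99 < l) (hl1 : l < 1) (r : ℝ) {H : Set ℝ}
    (hH : MeasurableSet H) :
    Measurable fun p : ℝ × ℝ => (closeSet b l r H p.2).indicator (1 : ℝ → ENNReal) p.1 := by
  have := continuous_Wc (b := b) hl hl1
  have hm : Measurable fun p : ℝ × ℝ => |Wc b l (p.1 + p.2) - Wc b l p.1| := by fun_prop
  have hs : MeasurableSet {p : ℝ × ℝ | p.1 ∈ H ∧ |Wc b l (p.1 + p.2) - Wc b l p.1| ≤ r} :=
    (measurable_fst hH).inter (measurableSet_le hm measurable_const)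
  exact (measurable_one (α := ENNReal)).indicator hs

/-- The mass of the increments `t` of size comparable to `b ^ (-i)` which change the Weierstrass
function at `x` by at most `r`, set to zero off `H`. -/
def pointMass (b : ℕ) (l : ℝ) (i : ℕ) (r : ℝ) (H : Set ℝ) (x : ℝ) : ENNReal :=
  ∫⁻ t in annulus b i, (closeSet b l r H t).indicator 1 x

lemma measurable_pointMass (hl : 0.99 < l) (hl1 : l < 1) (i : ℕ) (r : ℝ) {H : Set ℝ}
    (hH : MeasurableSet H) : Measurable (pointMass b l i r H) :=
  (measurable_indicator_closeSet hl hl1 r hH).lintegral_prod_right'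

lemma lintegral_pointMass (hl : 0.99 < l) (hl1 : l < 1) (i : ℕ) (r : ℝ) {H : Set ℝ}
    (hH : MeasurableSet H) :
    ∫⁻ x in Ico (0 : ℝ) 1, pointMass b l i r H x = pairMass b l i r H :=
  lintegral_lintegral_swap (measurable_indicator_closeSet hl hl1 r hH).aemeasurable

/-- The mass of the graph near a point is the sum of the contributions of the annuli. -/
lemma volume_close_le (hb : 2 ≤ b) (hl : 0.99 < l) (hl1 : l < 1) {n : ℕ} {r : ℝ}
    (hr : ((b : ℝ) ^ n)⁻¹ ≤ r) {x : ℝ} {H : ℕ → Set ℝ} (hx : ∀ i ∈ Finset.Icc n (2 * n), x ∈ H i) :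
    volume {t | |t| ≤ ((b : ℝ) ^ n)⁻¹ ∧ |Wc b l (x + t) - Wc b l x| ≤ ((b : ℝ) ^ n)⁻¹} ≤
      ∑ i ∈ Finset.Icc n (2 * n), pointMass b l i r (H i) x +
        ENNReal.ofReal (2 * ((b : ℝ) ^ (2 * n))⁻¹) := by
  have hb' : (1 : ℝ) < b := by exact_mod_cast (by omega : 1 < b)
  have hb0 : (0 : ℝ) < b := by linarith
  set T := {t | |t| ≤ ((b : ℝ) ^ n)⁻¹ ∧ |Wc b l (x + t) - Wc b l x| ≤ ((b : ℝ) ^ n)⁻¹} with hT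
  set κ := ((b : ℝ) ^ (2 * n))⁻¹ with hκ
  have hsub : T ⊆ (⋃ i ∈ Finset.Icc n (2 * n), T ∩ annulus b i) ∪ Icc (-κ) κ := by
    intro t ht
    by_cases h : |t| ≤ κ
    · exact Or.inr (abs_le.mp h)
    · refine Or.inl ?_
      push Not at h
      have h0 : 0 < |t| := lt_trans (by positivity) h
      obtain ⟨i, hi1, hi2⟩ := exists_nat_pow_near_of_lt_one h0
        (ht.1.trans (inv_le_one_of_one_le₀ (one_le_pow₀ hb'.le))) (inv_pos.mpr hb0)
        (inv_lt_one_of_one_lt₀ hb')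
      rw [inv_pow] at hi1 hi2
      have h1 := (pow_lt_pow_iff_right₀ hb').mp
        ((inv_lt_inv₀ (by positivity) (by positivity)).mp (hi1.trans_le ht.1))
      have h2 := (pow_lt_pow_iff_right₀ hb').mp
        ((inv_lt_inv₀ (by positivity) (by positivity)).mp (h.trans_le hi2))
      simp only [mem_iUnion]
      exact ⟨i, Finset.mem_Icc.mpr ⟨by omega, by omega⟩, ht, hi1, hi2⟩
  refine (measure_mono hsub).trans ((measure_union_le _ _).trans ?_)
  refine add_le_add ((measure_biUnion_finset_le _ _).trans (Finset.sum_le_sum fun i hi => ?_)) ?_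
  · refine (Measure.le_restrict_apply _ _).trans ?_
    have hW := continuous_Wc (b := b) hl hl1
    have hm : Measurable fun t => |Wc b l (x + t) - Wc b l x| := by fun_prop
    calc _ ≤ (volume.restrict (annulus b i)) {t | |Wc b l (x + t) - Wc b l x| ≤ r} :=
          measure_mono fun t ht => ht.2.trans hr
      _ = ∫⁻ t in annulus b i, {t | |Wc b l (x + t) - Wc b l x| ≤ r}.indicator 1 t :=
          (lintegral_indicator_one (measurableSet_le hm measurable_const)).symm
      _ ≤ _ := by
          refine lintegral_mono fun t => ?_
          by_cases ht : t ∈ {t | |Wc b l (x + t) - Wc b l x| ≤ r}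
          · have : x ∈ closeSet b l r (H i) t := ⟨hx i hi, ht⟩
            rw [indicator_of_mem this]
            exact indicator_le_self' (fun _ _ => zero_le) t
          · rw [indicator_of_notMem ht]
            exact zero_le
  · rw [Real.volume_Icc]
    exact ENNReal.ofReal_le_ofReal (by linarith)

lemma tsum_ofReal_succ_mul_ne_top (C : ℝ) {s : ℝ} (hs0 : 0 ≤ s) (hs1 : s < 1) :
    ∑' n : ℕ, ENNReal.ofReal ((n + 1) * (C * s ^ n)) ≠ ⊤ := by
  have hs : ‖s‖ < 1 := by rwa [Real.norm_of_nonneg hs0]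
  have h := ((summable_pow_mul_geometric_of_norm_lt_one 1 hs).add
    (summable_pow_mul_geometric_of_norm_lt_one 0 hs)).mul_left C
  refine Summable.tsum_ofReal_ne_top (h.congr fun n => ?_)
  ring

/-- A saving `θ` for the pair masses gives the dimension bound `1 + θ`. -/
lemma le_dimH_of_pairBound (hb : 2 ≤ b) (hl : 0.99 < l) (hl1 : l < 1) {θ : ℝ}
    (hθ : PairBound b l θ) (hθ1 : θ ≤ 1) {d : NNReal} (hd : d < 1 + θ) :
    (d : ENNReal) ≤ dimH ((fun x => (x, Wc b l x)) '' Ico (0 : ℝ) 1) := by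
  have hb' : (1 : ℝ) < b := by exact_mod_cast (by omega : 1 < b)
  have hb0 : (0 : ℝ) < b := by linarith
  obtain ⟨C, hC, c, hc, hyp⟩ := hθ
  choose! H hHm hH1 hH2 using hyp
  set r : ℕ → ℝ := fun n => 2 / (1 - l) * ((b : ℝ) ^ n)⁻¹ with hr
  set G : ℕ → ℝ → ENNReal := fun n x =>
    ∑ i ∈ Finset.Icc n (2 * n), pointMass b l i (r n) (H n i) x with hG
  set bad₁ : ℕ → Set ℝ := fun n => ⋃ i ∈ Finset.Icc n (2 * n), {x ∈ Ico (0 : ℝ) 1 | x ∉ H n i}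
  set bad₂ : ℕ → Set ℝ := fun n =>
    {x | ENNReal.ofReal ((b : ℝ) ^ (-(n * d : ℝ))) ≤ G n x} ∩ Ico (0 : ℝ) 1
  have hcard : ∀ n : ℕ, ((Finset.Icc n (2 * n)).card : ENNReal) = ENNReal.ofReal (n + 1) := by
    intro n
    rw [Nat.card_Icc, show 2 * n + 1 - n = n + 1 by omega]
    exact_mod_cast (ENNReal.ofReal_natCast (n + 1)).symm
  have hv₁ : ∀ n, volume (bad₁ n) ≤ ENNReal.ofReal ((n + 1) * (C * ((b : ℝ) ^ (-c)) ^ n)) := by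
    intro n
    refine (measure_biUnion_finset_le _ _).trans ((Finset.sum_le_card_nsmul _ _
      (ENNReal.ofReal (C * ((b : ℝ) ^ (-c)) ^ n)) fun i hi => ?_).trans ?_)
    · rw [Finset.mem_Icc] at hi
      refine (hH1 n i hi.1 hi.2).trans_eq ?_
      rw [← rpow_natCast, ← rpow_mul hb0.le, neg_mul]
    · rw [nsmul_eq_mul, hcard, ENNReal.ofReal_mul (p := (n : ℝ) + 1) (by positivity)]
  have hv₂ : ∀ n, volume (bad₂ n) ≤
      ENNReal.ofReal ((n + 1) * (C * ((b : ℝ) ^ (-(1 + θ - d))) ^ n)) := by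
    intro n
    have hGm : Measurable (G n) := by
      refine Finset.measurable_fun_sum _ fun i hi => ?_
      rw [Finset.mem_Icc] at hi
      exact measurable_pointMass hl hl1 i (r n) (hHm n i hi.1 hi.2)
    have hp : (0 : ℝ) < (b : ℝ) ^ (-(n * d : ℝ)) := by positivity
    refine (Measure.le_restrict_apply _ _).trans
      ((meas_ge_le_lintegral_div hGm.aemeasurable (by simpa using hp)
        ENNReal.ofReal_ne_top).trans ?_)
    rw [ENNReal.div_le_iff (by simpa using hp) ENNReal.ofReal_ne_top, hG,
      lintegral_finsetSum' _ (fun i hi => (measurable_pointMass hl hl1 i (r n) (hHm n i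
        (Finset.mem_Icc.mp hi).1 (Finset.mem_Icc.mp hi).2)).aemeasurable)]
    refine (Finset.sum_le_card_nsmul _ _
      (ENNReal.ofReal (C * (b : ℝ) ^ (-(n * (1 + θ))))) fun i hi => ?_).trans ?_
    · rw [Finset.mem_Icc] at hi
      rw [lintegral_pointMass hl hl1 i (r n) (hHm n i hi.1 hi.2)]
      exact hH2 n i hi.1 hi.2
    · rw [nsmul_eq_mul, hcard, ← ENNReal.ofReal_mul (by positivity),
        ← ENNReal.ofReal_mul (by positivity), mul_assoc, mul_assoc, ← rpow_natCast _ n,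
        ← rpow_mul hb0.le, ← rpow_add hb0]
      refine le_of_eq ?_
      congr 4
      ring
  have hae₁ := ae_eventually_notMem (μ := volume) (s := bad₁) (ne_top_of_le_ne_top
    (tsum_ofReal_succ_mul_ne_top C (by positivity)
      (rpow_lt_one_of_one_lt_of_neg hb' (by linarith))) (ENNReal.tsum_le_tsum hv₁))
  have hae₂ := ae_eventually_notMem (μ := volume) (s := bad₂) (ne_top_of_le_ne_top
    (tsum_ofReal_succ_mul_ne_top C (by positivity)
      (rpow_lt_one_of_one_lt_of_neg hb' (by linarith))) (ENNReal.tsum_le_tsum hv₂))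
  set E : ℕ → Set ℝ := fun N => {x ∈ Ico (0 : ℝ) 1 | ∀ n ≥ N, x ∉ bad₁ n ∧ x ∉ bad₂ n} with hE
  obtain ⟨N, hN⟩ : ∃ N, volume (E N) ≠ 0 := by
    by_contra! h0
    have h1 : ∀ᵐ x, x ∉ ⋃ N, E N := by
      rw [← measure_eq_zero_iff_ae_notMem]
      exact measure_iUnion_null h0
    have h2 : ∀ᵐ x : ℝ, x ∉ Ico (0 : ℝ) 1 := by
      filter_upwards [h1, hae₁, hae₂] with x hx hx₁ hx₂ hx0
      obtain ⟨N, hN⟩ := eventually_atTop.mp (hx₁.and hx₂)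
      exact hx (mem_iUnion.mpr ⟨N, hx0, hN⟩)
    rw [← measure_eq_zero_iff_ae_notMem] at h2
    simp at h2
  refine le_dimH_graph (continuous_Wc hl hl1).measurable hb' (A := 3) (N := N) (by norm_num) hN
    (fun x hx => hx.1) fun x hx n hn => ?_
  obtain ⟨hx₁, hx₂⟩ := hx.2 n hn
  have hrn : ((b : ℝ) ^ n)⁻¹ ≤ r n := by
    refine le_mul_of_one_le_left (by positivity) ?_
    rw [le_div_iff₀ (by linarith)]
    linarith
  refine (volume_close_le hb hl hl1 hrn (H := H n) fun i hi => ?_).trans ?_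
  · by_contra hxi
    exact hx₁ (mem_biUnion (x := i) hi ⟨hx.1, hxi⟩)
  · have h1 : G n x ≤ ENNReal.ofReal ((b : ℝ) ^ (-(n * d : ℝ))) := by
      by_contra! h
      exact hx₂ ⟨h.le, hx.1⟩
    refine (add_le_add_left h1 _).trans ?_
    rw [← ENNReal.ofReal_add (by positivity) (by positivity)]
    refine ENNReal.ofReal_le_ofReal ?_
    have h2 : ((b : ℝ) ^ (2 * n))⁻¹ ≤ (b : ℝ) ^ (-(n * d : ℝ)) := by
      rw [← rpow_natCast, ← rpow_neg hb0.le]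
      refine rpow_le_rpow_of_exponent_le hb'.le ?_
      have hn0 : (0 : ℝ) ≤ n := by positivity
      push_cast
      nlinarith
    linarith

end LowerBound

section UpperBound

variable {b : ℕ} {l : ℝ}

/-- The oscillation of the Weierstrass function at scale `b ^ (-n)`. -/
lemma abs_Wc_sub_le (hb : 2 ≤ b) (hl : 0.99 < l) (hl1 : l < 1) (n : ℕ) (z : ℝ) {s : ℝ}
    (hs : |s| ≤ 1) :
    |Wc b l ((z + s) / b ^ n) - Wc b l (z / b ^ n)| ≤ (2 * (1 - l)⁻¹ + 34) * l ^ n := by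
  have hln : 0 < l ^ n := pow_pos (by linarith) n
  rw [← div_le_iff₀ hln, ← abs_of_pos hln, ← abs_div]
  have h1 := abs_Wc_increment_le hb hl hl1 n z s
  have h2 := abs_le.mp (abs_Wc_le (b := b) hl hl1 (z + s))
  have h3 := abs_le.mp (abs_Wc_le (b := b) hl hl1 z)
  have h4 : |2 * π * s * slopeSum b l n z| ≤ 14 := by
    rw [abs_mul, abs_mul, abs_of_pos (by positivity : 0 < 2 * π)]
    calc 2 * π * |s| * |slopeSum b l n z| ≤ 2 * 3.5 * 1 * 2 := by
          gcongr
          · linarith [pi_lt_d2]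
          · exact abs_slopeSum_le hb hl _ _
      _ = 14 := by norm_num
  have h5 : s ^ 2 ≤ 1 := by rw [← sq_abs]; exact pow_le_one₀ (abs_nonneg s) hs
  rw [abs_le] at *
  constructor <;> linarith

/-- The graph over a mesh interval is covered by few squares. -/
lemma graph_subset_iUnion_squares (hb : 2 ≤ b) (hl : 0.99 < l) (hl1 : l < 1) (n : ℕ) {m : ℕ}
    (hm : 2 * (2 * (1 - l)⁻¹ + 34) * l ^ n * b ^ n < m) :
    (fun x => (x, Wc b l x)) '' Ico (0 : ℝ) 1 ⊆ ⋃ p : Fin (b ^ n) × Fin m,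
      Icc ((p.1 : ℝ) / b ^ n) ((p.1 : ℝ) / b ^ n + ((b : ℝ) ^ n)⁻¹) ×ˢ
      Icc (Wc b l (p.1 / b ^ n) - (2 * (1 - l)⁻¹ + 34) * l ^ n + p.2 / b ^ n)
        (Wc b l (p.1 / b ^ n) - (2 * (1 - l)⁻¹ + 34) * l ^ n + p.2 / b ^ n +
          ((b : ℝ) ^ n)⁻¹) := by
  have hb0 : (0 : ℝ) < b := by exact_mod_cast (by omega : 0 < b)
  have hbn : (0 : ℝ) < b ^ n := by positivity
  set M := 2 * (1 - l)⁻¹ + 34 with hM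
  rintro _ ⟨x, ⟨hx0, hx1⟩, rfl⟩
  have hy0 : 0 ≤ b ^ n * x := by positivity
  set i := ⌊(b : ℝ) ^ n * x⌋₊ with hi
  have hi1 : (i : ℝ) ≤ b ^ n * x := Nat.floor_le hy0
  have hi2 : b ^ n * x < i + 1 := Nat.lt_floor_add_one _
  have hib : i < b ^ n := by
    have : (i : ℝ) < b ^ n := hi1.trans_lt (mul_lt_of_lt_one_right hbn hx1)
    exact_mod_cast this
  have hosc := abs_Wc_sub_le hb hl hl1 n i (s := b ^ n * x - i)
    (abs_le.mpr ⟨by linarith, by linarith⟩)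
  rw [add_sub_cancel, mul_div_cancel_left₀ x hbn.ne', ← hM, abs_le] at hosc
  set v := (Wc b l x - (Wc b l (i / b ^ n) - M * l ^ n)) with hv
  have hv0 : 0 ≤ v * b ^ n := mul_nonneg (by linarith) hbn.le
  set j := ⌊v * (b : ℝ) ^ n⌋₊ with hj
  have hj1 : (j : ℝ) ≤ v * b ^ n := Nat.floor_le hv0
  have hj2 : v * b ^ n < j + 1 := Nat.lt_floor_add_one _
  have hjm : j < m := by
    have h1 : v * b ^ n ≤ 2 * M * l ^ n * b ^ n :=
      mul_le_mul_of_nonneg_right (by linarith) hbn.le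
    have : (j : ℝ) < m := by linarith
    exact_mod_cast this
  refine mem_iUnion.mpr ⟨(⟨i, hib⟩, ⟨j, hjm⟩), ⟨?_, ?_⟩, ?_, ?_⟩
  · exact (div_le_iff₀ hbn).mpr (by linarith)
  · rw [← one_div, ← add_div]
    exact (le_div_iff₀ hbn).mpr (by linarith)
  · have : (j : ℝ) / b ^ n ≤ v := (div_le_iff₀ hbn).mpr hj1
    change _ + (j : ℝ) / b ^ n ≤ Wc b l x
    linarith
  · have : v ≤ (j : ℝ) / b ^ n + ((b : ℝ) ^ n)⁻¹ := by
      rw [← one_div, ← add_div]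
      exact (le_div_iff₀ hbn).mpr hj2.le
    change Wc b l x ≤ _ + (j : ℝ) / b ^ n + _
    linarith

lemma ediam_square_le (x y δ : ℝ) :
    Metric.ediam (Icc x (x + δ) ×ˢ Icc y (y + δ)) ≤ ENNReal.ofReal δ := by
  refine Metric.ediam_le fun p hp q hq => ?_
  rw [edist_dist, Prod.dist_eq]
  refine ENNReal.ofReal_le_ofReal (max_le ?_ ?_)
  · simpa using Real.dist_le_of_mem_Icc hp.1 hq.1
  · simpa using Real.dist_le_of_mem_Icc hp.2 hq.2

lemma dimH_graph_le (hb : 2 ≤ b) (hl : 0.99 < l) (hl1 : l < 1) {d : NNReal}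
    (hd : (b : ℝ) * b * l = (b : ℝ) ^ (d : ℝ)) :
    dimH ((fun x => (x, Wc b l x)) '' Ico (0 : ℝ) 1) ≤ d := by
  have hb' : (2 : ℝ) ≤ b := by exact_mod_cast hb
  have hb0 : (0 : ℝ) < b := by linarith
  have hl0 : 0 < l := by linarith
  set M := 2 * (1 - l)⁻¹ + 34 with hM
  have hM0 : 0 < M := by
    have : 0 < (1 - l)⁻¹ := inv_pos.mpr (by linarith)
    positivity
  set m : ℕ → ℕ := fun n => ⌊2 * M * l ^ n * b ^ n⌋₊ + 1 with hm
  have hm1 : ∀ n, 2 * M * l ^ n * b ^ n < m n := fun n => by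
    rw [hm]; push_cast; exact Nat.lt_floor_add_one _
  have hm2 : ∀ n, (m n : ℝ) ≤ (2 * M + 1) * (l * b) ^ n := fun n => by
    have h1 := Nat.floor_le (by positivity : 0 ≤ 2 * M * l ^ n * b ^ n)
    have h2 : 1 ≤ (l * b) ^ n := one_le_pow₀ (by nlinarith)
    rw [hm]; push_cast
    rw [mul_pow] at *
    linarith
  set T : (n : ℕ) → Fin (b ^ n) × Fin (m n) → Set (ℝ × ℝ) := fun n p =>
    Icc ((p.1 : ℝ) / b ^ n) ((p.1 : ℝ) / b ^ n + ((b : ℝ) ^ n)⁻¹) ×ˢ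
      Icc (Wc b l (p.1 / b ^ n) - M * l ^ n + p.2 / b ^ n)
        (Wc b l (p.1 / b ^ n) - M * l ^ n + p.2 / b ^ n + ((b : ℝ) ^ n)⁻¹) with hT
  have hTd : ∀ n p, Metric.ediam (T n p) ≤ ENNReal.ofReal (((b : ℝ) ^ n)⁻¹) :=
    fun n p => ediam_square_le _ _ _
  have hlim : Tendsto (fun n : ℕ => ENNReal.ofReal (((b : ℝ) ^ n)⁻¹)) atTop (nhds 0) := by
    rw [← ENNReal.ofReal_zero]
    refine ENNReal.tendsto_ofReal ?_
    simp only [← inv_pow]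
    exact tendsto_pow_atTop_nhds_zero_of_lt_one (by positivity)
      (inv_lt_one_of_one_lt₀ (by linarith))
  have hsum : ∀ n, ∑ p, Metric.ediam (T n p) ^ (d : ℝ) ≤ ENNReal.ofReal (2 * M + 1) := by
    intro n
    have hp : (0 : ℝ) < ((b : ℝ) ^ n)⁻¹ := by positivity
    refine (Finset.sum_le_card_nsmul _ _ (ENNReal.ofReal ((((b : ℝ) ^ n)⁻¹) ^ (d : ℝ)))
      fun p _ => ?_).trans ?_
    · rw [← ENNReal.ofReal_rpow_of_pos hp]
      exact ENNReal.rpow_le_rpow (hTd n p) d.2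
    · rw [nsmul_eq_mul, Finset.card_univ, Fintype.card_prod, Fintype.card_fin, Fintype.card_fin,
        ← ENNReal.ofReal_natCast, ← ENNReal.ofReal_mul (by positivity)]
      refine ENNReal.ofReal_le_ofReal ?_
      have e : (((b : ℝ) ^ n)⁻¹) ^ (d : ℝ) = ((b * b * l) ^ n)⁻¹ := by
        rw [inv_rpow (by positivity), ← rpow_natCast, ← rpow_mul hb0.le, mul_comm,
          rpow_mul hb0.le, rpow_natCast, hd]
      rw [e, ← div_eq_mul_inv, div_le_iff₀ (by positivity)]
      push_cast
      calc (b : ℝ) ^ n * m n ≤ b ^ n * ((2 * M + 1) * (l * b) ^ n) := by gcongr; exact hm2 n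
        _ = _ := by ring
  refine dimH_le_of_hausdorffMeasure_ne_top (ne_top_of_le_ne_top ENNReal.ofReal_ne_top
    (b := ENNReal.ofReal (2 * M + 1)) ?_)
  refine (Measure.hausdorffMeasure_le_liminf_sum (d : ℝ) _ _ hlim T
    (Eventually.of_forall hTd)
    (Eventually.of_forall fun n => graph_subset_iUnion_squares hb hl hl1 n (hm1 n))).trans ?_
  exact (liminf_le_liminf (Eventually.of_forall hsum)).trans_eq (liminf_const _)

end UpperBound

/-- For each integer `b ≥ 2` there exists `λ_b < 1` such that for every `λ ∈ (λ_b, 1)` the graph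
of the classical Weierstrass function `W_{λ,b}` has Hausdorff dimension `2 + log λ / log b`. -/
theorem stmt1 (b : ℕ) (hb : 2 ≤ b) :
    ∃ lb : ℝ, lb < 1 ∧ ∀ l : ℝ, lb < l → l < 1 →
      dimH ((fun x => (x, Wc b l x)) '' Set.Ico (0 : ℝ) 1)
        = ENNReal.ofReal (2 + Real.log l / Real.log b) := by
  refine ⟨0.99, by norm_num, fun l hl hl1 => ?_⟩
  have hb' : (2 : ℝ) ≤ b := by exact_mod_cast hb
  have hb0 : (0 : ℝ) < b := by linarith
  have hl0 : 0 < l := by linarith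
  set α := -(Real.log l / Real.log b) with hα
  have hlogb : 0.69 < Real.log b :=
    (by linarith [log_two_gt_d9] : 0.69 < Real.log 2).trans_le (log_le_log (by norm_num) hb')
  have hlogl : Real.log l < 0 := log_neg hl0 hl1
  have hlogl' : -0.1 < Real.log l := by
    have h1 := one_sub_inv_le_log_of_pos hl0
    have h2 : l⁻¹ < 1.1 := by
      rw [inv_lt_comm₀ hl0 (by norm_num)]
      exact lt_trans (by norm_num) hl
    linarith
  have hα0 : 0 < α := by
    rw [hα, ← neg_div]
    exact div_pos (by linarith) (by linarith)
  have hα1 : α ≤ 1 / 4 := by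
    rw [hα, ← neg_div, div_le_iff₀ (by linarith)]
    linarith
  have hlα : l = (b : ℝ) ^ (-α) := by
    rw [hα, neg_neg, rpow_def_of_pos hb0, mul_div_cancel₀ _ (by linarith), exp_log hl0]
  rw [show 2 + Real.log l / Real.log b = 2 - α by rw [hα]; ring]
  refine le_antisymm ?_ ?_
  · refine dimH_graph_le hb hl hl1 (d := (2 - α).toNNReal) ?_
    rw [Real.coe_toNNReal _ (by linarith), sub_eq_add_neg, rpow_add hb0, ← hlα, rpow_two, sq]
  · refine le_of_forall_lt fun c hc => ?_
    obtain ⟨d, hcd, hd⟩ := ENNReal.lt_iff_exists_nnreal_btwn.mp hc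
    refine hcd.trans_le ?_
    have hd' : (d : ℝ) < 2 - α := by
      rw [← ENNReal.ofReal_coe_nnreal, ENNReal.ofReal_lt_ofReal_iff (by linarith)] at hd
      exact hd
    exact le_dimH_of_pairBound hb hl hl1
      (pairBound_of_lt hb hl hl1 hlα hα0 hα1 (θ := ((d - 1) + (1 - α)) / 2) (by linarith))
      (by linarith) (by linarith)
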